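/- Let n ≥ 5 and 1 ≤ q < ∞, and set p = nq. There exists a constant C (depending only on n and q) such that ‖A_*[f₁,…,f_n]‖_{ℓ^q(ℤ)} ≤ C ∏_{i=1}^n ‖f_i‖_{ℓ^p(ℤ)} for all f₁,…,f_n ∈ ℓ^p(ℤ). -/

import Mathlib

open scoped BigOperators ENNReal NNReal
open MeasureTheory Finset

noncomputable section

/-- `sphereCount n lam` is the number of lattice points `x ∈ ℤ^n` with
`x₁² + ⋯ + x_n² = lam`. -/
def sphereCount (n lam : ℕ) : ℕ :=
  {x : Fin n → ℤ | ∑ i, (x i) ^ 2 = (lam : ℤ)}.ncard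

/-- The multilinear spherical average
`A_lam[f₁,…,f_n](y) = (1/r_n(lam)) ∑_{|x|² = lam} f₁(y-x₁)⋯f_n(y-x_n)`. -/
def mulAvg (n lam : ℕ) (f : Fin n → ℤ → ℂ) (y : ℤ) : ℂ :=
  (sphereCount n lam : ℂ)⁻¹ *
    ∑ᶠ x ∈ {x : Fin n → ℤ | ∑ i, (x i) ^ 2 = (lam : ℤ)}, ∏ i, f i (y - x i)

/-- The maximal function `A_*[f₁,…,f_n](y) = sup_{lam ≥ 1} |A_lam[f₁,…,f_n](y)|`. -/
def maxFn (n : ℕ) (f : Fin n → ℤ → ℂ) (y : ℤ) : ℝ≥0∞ :=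
  ⨆ (lam : ℕ) (_ : 1 ≤ lam), (‖mulAvg n lam f y‖₊ : ℝ≥0∞)

/-- The `ℓ^p(ℤ)` norm of a complex-valued function, valued in `ℝ≥0∞`. -/
def lpNorm (p : ℝ) (g : ℤ → ℂ) : ℝ≥0∞ :=
  (∑' x : ℤ, (‖g x‖₊ : ℝ≥0∞) ^ p) ^ (1 / p)

/-- The `ℓ^q(ℤ)` norm of an `ℝ≥0∞`-valued function. -/
def lqNormE (q : ℝ) (g : ℤ → ℝ≥0∞) : ℝ≥0∞ :=
  (∑' x : ℤ, g x ^ q) ^ (1 / q)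

open Complex in
/-- second theta constant -/
def thTwo (τ : ℂ) : ℂ := cexp (Real.pi * I * τ / 4) * jacobiTheta₂ (τ / 2) τ
open Complex in
lemma th_T3 (τ : ℂ) : jacobiTheta₂ 0 (τ + 1) = jacobiTheta₂ (1/2) τ := by
  unfold jacobiTheta₂
  refine tsum_congr fun n => ?_
  unfold jacobiTheta₂_term
  have : (2 * ↑Real.pi * I * ↑n * 0 + ↑Real.pi * I * ↑n ^ 2 * (τ + 1)) =
     (2 * ↑Real.pi * I * ↑n * (1/2) + ↑Real.pi * I * ↑n ^ 2 * τ) + (↑((n^2 - n)/2) : ℤ) * (2 * Real.pi * I) := by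
    have h2 : (2:ℤ) ∣ n^2 - n := by
      have := Int.even_mul_pred_self n
      rw [show n^2 - n = n * (n-1) by ring]; exact this.two_dvd
    obtain ⟨k, hk⟩ := h2
    rw [hk]
    have h3 : (n:ℂ)^2 = 2 * k + n := by
      have : ((n^2 - n : ℤ):ℂ) = ((2*k : ℤ):ℂ) := by rw [hk]
      push_cast at this; linear_combination this
    simp only [ne_eq, OfNat.ofNat_ne_zero, not_false_eq_true, Int.mul_ediv_cancel_left]
    rw [h3]; ring
  rw [this, exp_add, exp_int_mul_two_pi_mul_I, mul_one]
open Complex in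
lemma th_T4 (τ : ℂ) : jacobiTheta₂ (1/2) (τ + 1) = jacobiTheta₂ 0 τ := by
  rw [← th_T3, add_assoc, show (1:ℂ) + 1 = 2 by norm_num, jacobiTheta₂_add_right]
open Complex in
lemma th_T2 (τ : ℂ) : ‖thTwo (τ + 1)‖ = ‖thTwo τ‖ := by
  have h : jacobiTheta₂ ((τ+1) / 2) (τ + 1) = jacobiTheta₂ (τ/2) τ := by
    unfold jacobiTheta₂
    refine tsum_congr fun n => ?_
    unfold jacobiTheta₂_term
    have h2 : (2:ℤ) ∣ n^2 + n := by
      have := Int.even_mul_succ_self n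
      rw [show n^2 + n = n * (n+1) by ring]; exact this.two_dvd
    obtain ⟨k, hk⟩ := h2
    have h3 : (n:ℂ)^2 = 2 * k - n := by
      have : ((n^2 + n : ℤ):ℂ) = ((2*k : ℤ):ℂ) := by rw [hk]
      push_cast at this; linear_combination this
    have : (2 * ↑Real.pi * I * ↑n * ((τ + 1)/2) + ↑Real.pi * I * ↑n ^ 2 * (τ + 1)) =
     (2 * ↑Real.pi * I * ↑n * (τ/2) + ↑Real.pi * I * ↑n ^ 2 * τ) + (k : ℤ) * (2 * Real.pi * I) := by
      rw [h3]; ring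
    rw [this, exp_add, exp_int_mul_two_pi_mul_I, mul_one]
  unfold thTwo
  rw [h, norm_mul, norm_mul]
  congr 1
  rw [Complex.norm_exp, Complex.norm_exp]
  congr 1
  simp [Complex.add_re, Complex.mul_re, Complex.div_re]

open Complex in
lemma th_S (τ : ℂ) (hτ : 0 < τ.im) :
    ‖jacobiTheta₂ 0 τ‖ = ‖τ‖ ^ (-(1/2:ℝ)) * ‖jacobiTheta₂ 0 (-1/τ)‖ ∧
    ‖jacobiTheta₂ (1/2) τ‖ = ‖τ‖ ^ (-(1/2:ℝ)) * ‖thTwo (-1/τ)‖ ∧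
    ‖thTwo τ‖ = ‖τ‖ ^ (-(1/2:ℝ)) * ‖jacobiTheta₂ (1/2) (-1/τ)‖ := by
  have hτ0 : τ ≠ 0 := by rintro rfl; simp at hτ
  have key : ‖1 / (-I * τ) ^ (1/2:ℂ)‖ = ‖τ‖ ^ (-(1/2:ℝ)) := by
    have h0 : -I * τ ≠ 0 := by simp [hτ0]
    rw [norm_div, norm_one, show (1/2:ℂ) = ((1/2:ℝ):ℂ) by push_cast; rfl, Complex.norm_cpow_real]
    rw [Real.rpow_neg (norm_nonneg _)]; simp
  refine ⟨?_, ?_, ?_⟩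
  · rw [jacobiTheta₂_functional_equation, norm_mul, norm_mul, key]; simp
  · rw [jacobiTheta₂_functional_equation, norm_mul, norm_mul, key, mul_assoc]
    congr 1
    rw [← norm_mul, thTwo]
    congr 2
    · congr 1; field_simp; norm_num
    · rw [← jacobiTheta₂_neg_left]; congr 1; field_simp
  · unfold thTwo
    rw [norm_mul, jacobiTheta₂_functional_equation, norm_mul, norm_mul, key]
    have : cexp (Real.pi * I * τ / 4) * cexp (-Real.pi * I * (τ/2)^2 / τ) = 1 := by
      rw [← exp_add]
      have : (Real.pi * I * τ / 4) + (-Real.pi * I * (τ/2)^2 / τ) = 0 := by field_simp; ring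
      rw [this, exp_zero]
    have h1 : τ / 2 / τ = 1/2 := by field_simp
    rw [h1]
    have h2 := congrArg norm this
    rw [norm_mul, norm_one] at h2
    linear_combination (‖τ‖ ^ (-(1/2:ℝ)) * ‖jacobiTheta₂ (1/2) (-1/τ)‖) * h2

open Complex in
lemma th_bound : ∃ K : ℝ, ∀ τ : ℂ, 1/2 ≤ τ.im →
    ‖jacobiTheta₂ 0 τ‖ ≤ K ∧ ‖jacobiTheta₂ (1/2) τ‖ ≤ K ∧ ‖thTwo τ‖ ≤ K := by
  have hi : 0 < (I / 2).im := by simp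
  have gen : ∀ (z w σ τ : ℂ) (a b : ℝ), 0 < σ.im → 0 < τ.im → 0 ≤ a → 0 ≤ b →
      (∀ n : ℤ, a * ‖jacobiTheta₂_term n z τ‖ ≤ b * ‖jacobiTheta₂_term n w σ‖) →
      a * ‖jacobiTheta₂ z τ‖ ≤ b * ∑' n, ‖jacobiTheta₂_term n w σ‖ := by
    intro z w σ τ a b hσ hτ ha hb h
    have s1 := (hasSum_jacobiTheta₂_term z hτ).summable.norm
    have s2 := (hasSum_jacobiTheta₂_term w hσ).summable.norm
    calc a * ‖jacobiTheta₂ z τ‖ ≤ a * ∑' n, ‖jacobiTheta₂_term n z τ‖ :=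
          mul_le_mul_of_nonneg_left (norm_tsum_le_tsum_norm s1) ha
      _ = ∑' n, a * ‖jacobiTheta₂_term n z τ‖ := tsum_mul_left.symm
      _ ≤ ∑' n, b * ‖jacobiTheta₂_term n w σ‖ := (s1.mul_left a).tsum_le_tsum h (s2.mul_left b)
      _ = _ := tsum_mul_left
  have nn : ∀ w σ : ℂ, 0 ≤ ∑' n, ‖jacobiTheta₂_term n w σ‖ := fun w σ => tsum_nonneg fun _ => norm_nonneg _
  set A := ∑' n, ‖jacobiTheta₂_term n 0 (I/2)‖ with hA
  set B := ‖cexp (Real.pi * I * (I/2) / 4)‖ * ∑' n, ‖jacobiTheta₂_term n (I/2/2) (I/2)‖ with hB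
  have hA0 : 0 ≤ A := nn _ _
  have hB0 : 0 ≤ B := mul_nonneg (norm_nonneg _) (nn _ _)
  refine ⟨A + B, fun τ hτ => ?_⟩
  have hτ0 : 0 < τ.im := by linarith
  refine ⟨?_, ?_, ?_⟩
  · have := gen 0 0 (I/2) τ 1 1 hi hτ0 zero_le_one zero_le_one (fun n => by
      rw [one_mul, one_mul, norm_jacobiTheta₂_term, norm_jacobiTheta₂_term]
      apply Real.exp_le_exp.mpr
      simp
      have := mul_nonneg (mul_nonneg Real.pi_pos.le (sq_nonneg (n:ℝ))) (sub_nonneg.mpr hτ)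
      nlinarith)
    rw [one_mul, one_mul] at this; linarith
  · have := gen (1/2) 0 (I/2) τ 1 1 hi hτ0 zero_le_one zero_le_one (fun n => by
      rw [one_mul, one_mul, norm_jacobiTheta₂_term, norm_jacobiTheta₂_term]
      apply Real.exp_le_exp.mpr
      simp
      have := mul_nonneg (mul_nonneg Real.pi_pos.le (sq_nonneg (n:ℝ))) (sub_nonneg.mpr hτ)
      nlinarith)
    rw [one_mul, one_mul] at this; linarith
  · have := gen (τ/2) (I/2/2) (I/2) τ ‖cexp (Real.pi * I * τ / 4)‖ ‖cexp (Real.pi * I * (I/2) / 4)‖ hi hτ0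
      (norm_nonneg _) (norm_nonneg _) (fun n => by
      rw [norm_jacobiTheta₂_term, norm_jacobiTheta₂_term, Complex.norm_exp, Complex.norm_exp,
        ← Real.exp_add, ← Real.exp_add]
      apply Real.exp_le_exp.mpr
      have e1 : (Real.pi * I * τ / 4).re = - Real.pi * τ.im / 4 := by
        simp [Complex.mul_re, Complex.mul_im, Complex.div_re]
      have e2 : (Real.pi * I * (I/2) / 4).re = - Real.pi * (1/2) / 4 := by
        rw [show Real.pi * I * (I/2) / 4 = ((-Real.pi * (1/2)/4 : ℝ):ℂ) by
          push_cast; linear_combination (Real.pi / 8 : ℂ) * I_sq, ofReal_re]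
      rw [e1, e2]
      have e3 : (τ/2).im = τ.im/2 := by simp
      have e4 : (I/2/2).im = 1/2/2 := by simp
      have e5 : (I/2).im = 1/2 := by simp
      rw [e3, e4, e5]
      have := mul_nonneg (mul_nonneg Real.pi_pos.le (sq_nonneg ((n:ℝ)+1/2))) (sub_nonneg.mpr hτ)
      nlinarith)
    rw [← norm_mul] at this
    unfold thTwo; linarith

/-- the invariant quantity -/
def thPhi (τ : UpperHalfPlane) : ℝ :=
  max (max ‖jacobiTheta₂ 0 τ‖ ‖jacobiTheta₂ (1/2) τ‖) ‖thTwo τ‖ * τ.im ^ (1/4:ℝ)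

lemma thPhi_T (τ : UpperHalfPlane) : thPhi (ModularGroup.T • τ) = thPhi τ := by
  unfold thPhi
  rw [UpperHalfPlane.modular_T_smul]
  have : (((1:ℝ) +ᵥ τ : UpperHalfPlane) : ℂ) = τ + 1 := by
    rw [UpperHalfPlane.coe_vadd]; push_cast; ring
  rw [this, UpperHalfPlane.vadd_im, th_T3, th_T4, th_T2, max_comm ‖jacobiTheta₂ (1/2) _‖]

lemma thPhi_S (τ : UpperHalfPlane) : thPhi (ModularGroup.S • τ) = thPhi τ := by
  unfold thPhi
  have h0 : 0 < ‖(τ:ℂ)‖ := norm_pos_iff.mpr τ.ne_zero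
  rw [UpperHalfPlane.modular_S_smul]
  have e : (-(τ:ℂ))⁻¹ = -1/τ := by rw [neg_div, one_div, inv_neg]
  have him : (UpperHalfPlane.mk (-(τ:ℂ))⁻¹ τ.im_inv_neg_coe_pos).im = τ.im * (‖(τ:ℂ)‖ ^ 2)⁻¹ := by
    rw [← UpperHalfPlane.coe_im]
    simp [Complex.inv_im, Complex.normSq_eq_norm_sq, div_eq_mul_inv]
  rw [him]
  simp only [e]
  obtain ⟨h1, h2, h3⟩ := th_S τ τ.im_pos
  rw [h1, h2, h3]
  have hp : 0 ≤ ‖(τ:ℂ)‖ ^ (-(1/2:ℝ)) := by positivity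
  rw [← mul_max_of_nonneg _ _ hp, ← mul_max_of_nonneg _ _ hp,
    Real.mul_rpow τ.im_pos.le (by positivity)]
  have : ((‖(τ:ℂ)‖ ^ 2)⁻¹) ^ (1/4:ℝ) = ‖(τ:ℂ)‖ ^ (-(1/2:ℝ)) := by
    rw [Real.inv_rpow (by positivity), ← Real.rpow_natCast, ← Real.rpow_mul h0.le, Real.rpow_neg h0.le]
    norm_num
  rw [this, max_assoc, max_comm ‖jacobiTheta₂ (1/2) _‖, ← max_assoc]
  ring

open Matrix in
lemma thPhi_smul (g : SpecialLinearGroup (Fin 2) ℤ) : ∀ τ : UpperHalfPlane, thPhi (g • τ) = thPhi τ := by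
  have hg : g ∈ Subgroup.closure {ModularGroup.S, ModularGroup.T} := by
    simp [SpecialLinearGroup.SL2Z_generators]
  induction hg using Subgroup.closure_induction with
  | mem x hx =>
    rcases hx with rfl | hx
    · exact thPhi_S
    · rw [Set.mem_singleton_iff] at hx; subst hx; exact thPhi_T
  | one => simp
  | mul x y _ _ hx hy => intro τ; rw [mul_smul, hx, hy]
  | inv x _ hx => intro τ; rw [← hx (x⁻¹ • τ), smul_inv_smul]

open ModularGroup Matrix in
lemma theta_main : ∃ C : ℝ, 0 < C ∧ ∀ τ : UpperHalfPlane, ∃ c d : ℤ, IsCoprime c d ∧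
    ‖jacobiTheta τ‖ ≤ C * ‖(c:ℂ) * τ + d‖ ^ (-(1/2:ℝ)) := by
  obtain ⟨K, hK⟩ := th_bound
  refine ⟨max K 1, by positivity, fun τ => ?_⟩
  obtain ⟨g, hg⟩ := exists_smul_mem_fd τ
  refine ⟨g 1 0, g 1 1, ?_, ?_⟩
  · exact g.isCoprime_row 1
  have him : 1/2 ≤ (g • τ).im := by
    have := three_le_four_mul_im_sq_of_mem_fd hg
    have := (g • τ).im_pos
    nlinarith
  obtain ⟨k1, k2, k3⟩ := hK (g • τ : UpperHalfPlane) (by exact him)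
  have hphi : thPhi τ ≤ max K 1 * (g • τ).im ^ (1/4:ℝ) := by
    rw [← thPhi_smul g τ]
    unfold thPhi
    apply mul_le_mul_of_nonneg_right _ (Real.rpow_nonneg (g • τ).im_pos.le _)
    exact (max_le (max_le k1 k2) k3).trans (le_max_left _ _)
  have hd : UpperHalfPlane.denom (g : GL (Fin 2) ℝ) τ = (g 1 0 : ℂ) * τ + g 1 1 := by
    simp [UpperHalfPlane.denom]
  rw [im_smul_eq_div_normSq, hd, Complex.normSq_eq_norm_sq, div_eq_mul_inv,
    Real.mul_rpow τ.im_pos.le (by positivity)] at hphi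
  set D := ‖(g 1 0 : ℂ) * τ + g 1 1‖
  have : ((D ^ 2)⁻¹) ^ (1/4:ℝ) = D ^ (-(1/2:ℝ)) := by
    rw [Real.inv_rpow (by positivity), ← Real.rpow_natCast, ← Real.rpow_mul (norm_nonneg _), Real.rpow_neg (norm_nonneg _)]
    norm_num
  rw [this] at hphi
  have h1 : ‖jacobiTheta τ‖ * τ.im ^ (1/4:ℝ) ≤ thPhi τ := by
    unfold thPhi
    apply mul_le_mul_of_nonneg_right _ (Real.rpow_nonneg τ.im_pos.le _)
    rw [jacobiTheta_eq_jacobiTheta₂]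
    exact (le_max_left _ _).trans (le_max_left _ _)
  have h2 : 0 < τ.im ^ (1/4:ℝ) := Real.rpow_pos_of_pos τ.im_pos _
  refine le_of_mul_le_mul_right (h1.trans (hphi.trans (le_of_eq ?_))) h2
  ring

/-- sum of four squares -/
def nf (x0 x1 x2 x3 : ℤ) : ℤ := x0^2+x1^2+x2^2+x3^2

/-- lattice membership -/
def Lam (m a b v x0 x1 x2 x3 : ℤ) : Prop :=
  m ∣ (x0+a*x2-b*x3) + v*(-x1+b*x2+a*x3) ∧ m ∣ (x1+b*x2+a*x3)+v*(x0-a*x2+b*x3)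

lemma Lam_norm {m a b v x0 x1 x2 x3 : ℤ} (hm : m ∣ a^2+b^2+1) (h : Lam m a b v x0 x1 x2 x3) :
    m ∣ nf x0 x1 x2 x3 := by
  obtain ⟨k, hk⟩ := hm
  obtain ⟨⟨p, hp⟩, ⟨q, hq⟩⟩ := h
  refine ⟨(x0-a*x2+b*x3)*p - (-x1+b*x2+a*x3)*q + (x2^2+x3^2)*k, ?_⟩
  unfold nf
  linear_combination (x0-a*x2+b*x3)*hp - (-x1+b*x2+a*x3)*hq + (x2^2+x3^2)*hk

lemma Lam_mul {m a b v x0 x1 x2 x3 : ℤ} (z0 z1 z2 z3 : ℤ) (hm : m ∣ a^2+b^2+1)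
    (h : Lam m a b v x0 x1 x2 x3) :
    Lam m a b v (z0*x0-z1*x1-z2*x2-z3*x3) (z0*x1+z1*x0+z2*x3-z3*x2)
      (z0*x2-z1*x3+z2*x0+z3*x1) (z0*x3+z1*x2-z2*x1+z3*x0) := by
  obtain ⟨k, hk⟩ := hm
  obtain ⟨⟨p, hp⟩, ⟨q, hq⟩⟩ := h
  constructor
  · refine ⟨(z0+a*z2-b*z3)*p + (-z1+b*z2+a*z3)*q - k*((z2*x2+z3*x3) - v*(z3*x2-z2*x3)), ?_⟩
    linear_combination (z0+a*z2-b*z3)*hp + (-z1+b*z2+a*z3)*hq - hk*((z2*x2+z3*x3) - v*(z3*x2-z2*x3))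
  · refine ⟨(z1+b*z2+a*z3)*p + (z0-a*z2+b*z3)*q - k*(v*(z2*x2+z3*x3) + (z3*x2-z2*x3)), ?_⟩
    linear_combination (z1+b*z2+a*z3)*hp + (z0-a*z2+b*z3)*hq - hk*(v*(z2*x2+z3*x3) + (z3*x2-z2*x3))

lemma Lam_div {m a b v k x0 x1 x2 x3 : ℤ} (hk : IsCoprime m k)
    (h : Lam m a b v (k*x0) (k*x1) (k*x2) (k*x3)) : Lam m a b v x0 x1 x2 x3 := by
  obtain ⟨h1, h2⟩ := h
  constructor
  · apply hk.dvd_of_dvd_mul_left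
    rwa [show k * (x0+a*x2-b*x3 + v*(-x1+b*x2+a*x3)) =
      (k*x0)+a*(k*x2)-b*(k*x3) + v*(-(k*x1)+b*(k*x2)+a*(k*x3)) by ring]
  · apply hk.dvd_of_dvd_mul_left
    rwa [show k * (x1+b*x2+a*x3+v*(x0-a*x2+b*x3)) =
      (k*x1)+b*(k*x2)+a*(k*x3)+v*((k*x0)-a*(k*x2)+b*(k*x3)) by ring]

lemma Lam_descent {m a b v k w0 w1 w2 w3 u0 u1 u2 u3 : ℤ} (hm : m ∣ a^2+b^2+1) (hk : IsCoprime m k)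
    (hk0 : k ≠ 0) (hw : nf w0 w1 w2 w3 = k) (hx : nf (w0+k*u0) (w1+k*u1) (w2+k*u2) (w3+k*u3) = k*m)
    (h : Lam m a b v (w0+k*u0) (w1+k*u1) (w2+k*u2) (w3+k*u3)) :
    ∃ y0 y1 y2 y3, nf y0 y1 y2 y3 = m ∧ Lam m a b v y0 y1 y2 y3 := by
  refine ⟨1 + (w0*u0+w1*u1+w2*u2+w3*u3), w0*u1-w1*u0-w2*u3+w3*u2,
    w0*u2+w1*u3-w2*u0-w3*u1, w0*u3-w1*u2+w2*u1-w3*u0, ?_, ?_⟩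
  · have e : k^2 * nf (1 + (w0*u0+w1*u1+w2*u2+w3*u3)) (w0*u1-w1*u0-w2*u3+w3*u2)
      (w0*u2+w1*u3-w2*u0-w3*u1) (w0*u3-w1*u2+w2*u1-w3*u0) = k^2*m := by
      have e1 : k^2 * nf (1 + (w0*u0+w1*u1+w2*u2+w3*u3)) (w0*u1-w1*u0-w2*u3+w3*u2)
       (w0*u2+w1*u3-w2*u0-w3*u1) (w0*u3-w1*u2+w2*u1-w3*u0) =
        nf w0 w1 w2 w3 * nf (w0+k*u0) (w1+k*u1) (w2+k*u2) (w3+k*u3) := by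
        unfold nf at *
        rw [← hw]; ring
      rw [e1, hw, hx]; ring
    exact mul_left_cancel₀ (pow_ne_zero 2 hk0) e
  · apply Lam_div hk
    have := Lam_mul w0 (-w1) (-w2) (-w3) hm h
    unfold nf at hw
    convert this using 1
    · linear_combination -hw
    · ring
    · ring
    · ring

lemma Lam_inj {m a b v v' x0 x1 x2 x3 : ℤ} (hm : m ∣ a^2+b^2+1) (hm0 : 0 < m) (hm2 : IsCoprime m 2)
    (h : Lam m a b v x0 x1 x2 x3) (h' : Lam m a b v' x0 x1 x2 x3) (hN : nf x0 x1 x2 x3 = m) :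
    m ∣ v - v' := by
  obtain ⟨p1, p2⟩ := h
  obtain ⟨q1, q2⟩ := h'
  have hq : m ∣ (v-v')*(-x1+b*x2+a*x3) := by
    have := dvd_sub p1 q1; ring_nf at this ⊢; exact this
  have hs : m ∣ (v-v')*(x0-a*x2+b*x3) := by
    have := dvd_sub p2 q2; ring_nf at this ⊢; exact this
  have hp : m ∣ (v-v')*(x0+a*x2-b*x3) := by
    have := dvd_sub (p1.mul_left (v-v')) (hq.mul_left v)
    ring_nf at this ⊢; exact this
  have hr : m ∣ (v-v')*(x1+b*x2+a*x3) := by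
    have := dvd_sub (p2.mul_left (v-v')) (hs.mul_left v)
    ring_nf at this ⊢; exact this
  have d0 : m ∣ (v-v')*x0 := hm2.dvd_of_dvd_mul_left (by
    have := dvd_add hp hs; ring_nf at this ⊢; exact this)
  have d1 : m ∣ (v-v')*x1 := hm2.dvd_of_dvd_mul_left (by
    have := dvd_sub hr hq; ring_nf at this ⊢; exact this)
  have dA : m ∣ (v-v')*(a*x2-b*x3) := by
    have := dvd_sub hp d0; ring_nf at this ⊢; exact this
  have dB : m ∣ (v-v')*(b*x2+a*x3) := by
    have := dvd_sub hr d1; ring_nf at this ⊢; exact this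
  have d2 : m ∣ (v-v')*x2 := by
    have := dvd_sub (hm.mul_left ((v-v')*x2)) (dvd_add (dA.mul_left a) (dB.mul_left b))
    ring_nf at this ⊢; exact this
  have d3 : m ∣ (v-v')*x3 := by
    have := dvd_sub (hm.mul_left ((v-v')*x3)) (dvd_sub (dB.mul_left a) (dA.mul_left b))
    ring_nf at this ⊢; exact this
  set H := v - v' with hH
  have hg0 : (Int.gcd H m : ℤ) ≠ 0 := by
    intro h0
    have := Int.gcd_eq_zero_iff.mp (by exact_mod_cast h0)
    omega
  obtain ⟨H', hH'⟩ := Int.gcd_dvd_left H m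
  obtain ⟨g, hg⟩ := Int.gcd_dvd_right H m
  set e : ℤ := (Int.gcd H m : ℤ) with he
  have he0 : 0 < e := lt_of_le_of_ne (by positivity) (Ne.symm hg0)
  have hcop : IsCoprime g H' := by
    have h1 : e = H * Int.gcdA H m + m * Int.gcdB H m := Int.gcd_eq_gcd_ab H m
    refine ⟨Int.gcdB H m, Int.gcdA H m, ?_⟩
    apply mul_left_cancel₀ hg0
    generalize Int.gcdA H m = A at *
    generalize Int.gcdB H m = B at *
    have h2 : e = e * H' * A + e * g * B := by
      rw [← hH', ← hg]; exact h1
    linear_combination -h2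
  have dv : ∀ x : ℤ, m ∣ H * x → g ∣ x := by
    intro x hx
    apply hcop.dvd_of_dvd_mul_left
    have : e * g ∣ e * (H' * x) := by
      rw [← hg, ← mul_assoc, ← hH']; exact hx
    exact (mul_dvd_mul_iff_left hg0).mp this
  obtain ⟨y0, rfl⟩ := dv _ d0
  obtain ⟨y1, rfl⟩ := dv _ d1
  obtain ⟨y2, rfl⟩ := dv _ d2
  obtain ⟨y3, rfl⟩ := dv _ d3
  have hgpos : 0 < g := by
    by_contra hc; nlinarith
  have hL : Lam e a b v y0 y1 y2 y3 := by
    constructor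
    · have : g * e ∣ g * ((y0+a*y2-b*y3) + v*(-y1+b*y2+a*y3)) := by
        rw [mul_comm g e, ← hg]; convert p1 using 1; ring
      exact (mul_dvd_mul_iff_left hgpos.ne').mp this
    · have : g * e ∣ g * ((y1+b*y2+a*y3)+v*(y0-a*y2+b*y3)) := by
        rw [mul_comm g e, ← hg]; convert p2 using 1; ring
      exact (mul_dvd_mul_iff_left hgpos.ne').mp this
  obtain ⟨t, ht⟩ := Lam_norm ((Dvd.intro g hg.symm).trans hm) hL
  have e1 : g^2 * nf y0 y1 y2 y3 = e * g := by
    rw [← hg]; rw [← hN]; unfold nf; ring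
  rw [ht] at e1
  have e2 : g * t = 1 := by
    apply mul_left_cancel₀ (mul_pos he0 hgpos).ne'
    linear_combination e1
  have hg1 : g = 1 := by
    rcases Int.eq_one_or_neg_one_of_mul_eq_one e2 with h | h <;> omega
  rw [hg, hg1, mul_one]
  exact Dvd.intro H' hH'.symm

lemma Lam_small {m a b v x0 x1 x2 x3 : ℤ} (hm : m ∣ a^2+b^2+1) (hm0 : 0 < m)
    (hm2 : m % 2 = 1) (hm3 : m % 3 ≠ 0)
    (h : Lam m a b v x0 x1 x2 x3) (hN : nf x0 x1 x2 x3 ≤ 4 * m) (hN0 : 0 < nf x0 x1 x2 x3) :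
    ∃ y0 y1 y2 y3, nf y0 y1 y2 y3 = m ∧ Lam m a b v y0 y1 y2 y3 := by
  obtain ⟨k, hk⟩ := Lam_norm hm h
  have hk1 : 1 ≤ k := by by_contra hc; nlinarith
  have hk4 : k ≤ 4 := by by_contra hc; nlinarith
  have c2 : IsCoprime m 2 := ⟨1, -(m/2), by omega⟩
  have c3 : IsCoprime m 3 := by
    have : m % 3 = 1 ∨ m % 3 = 2 := by omega
    rcases this with h | h
    · exact ⟨1, -(m/3), by omega⟩
    · exact ⟨-1, m/3+1, by omega⟩
  have c4 : IsCoprime m 4 := by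
    have := c2.mul_right c2; norm_num at this; exact this
  have hsq : ∀ x : ℤ, (x % 2)^2 = x % 2 := by
    intro x; rcases Int.emod_two_eq_zero_or_one x with h | h <;> simp [h]
  have hbd : ∀ x : ℤ, 0 ≤ x % 2 ∧ x % 2 ≤ 1 := by intro x; omega
  have e2 : ∀ x : ℤ, x = x % 2 + 2 * (x/2) := by intro x; omega
  have hsum : nf x0 x1 x2 x3 = (x0%2+x1%2+x2%2+x3%2) +
      4 * ((x0%2)*(x0/2)+(x0/2)^2+(x1%2)*(x1/2)+(x1/2)^2+(x2%2)*(x2/2)+(x2/2)^2+(x3%2)*(x3/2)+(x3/2)^2) := by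
    have h0 := hsq x0; have h1 := hsq x1; have h2 := hsq x2; have h3 := hsq x3
    unfold nf
    conv_lhs => rw [e2 x0, e2 x1, e2 x2, e2 x3]
    linear_combination h0 + h1 + h2 + h3
  have b0 := hbd x0; have b1 := hbd x1; have b2 := hbd x2; have b3 := hbd x3
  interval_cases k
  · exact ⟨x0, x1, x2, x3, by linarith, h⟩
  · refine Lam_descent (k := 2) (w0 := x0%2) (w1 := x1%2) (w2 := x2%2) (w3 := x3%2) (u0 := x0/2)
      (u1 := x1/2) (u2 := x2/2) (u3 := x3/2) hm c2 (by norm_num) ?_ ?_ ?_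
    · unfold nf; rw [hsq, hsq, hsq, hsq]
      rw [hk] at hsum
      omega
    · rw [← e2, ← e2, ← e2, ← e2, hk]; ring
    · rw [← e2, ← e2, ← e2, ← e2]; exact h
  · have e3 : ∀ x : ℤ, x = ((x+1)%3-1) + 3 * ((x+1)/3) := by intro x; omega
    have hs3 : ∀ x : ℤ, ((x+1)%3-1)^2 = 0 ∧ ((x+1)%3-1) = 0 ∨ ((x+1)%3-1)^2 = 1 := by
      intro x
      have : (x+1)%3 = 0 ∨ (x+1)%3 = 1 ∨ (x+1)%3 = 2 := by omega
      rcases this with h | h | h <;> simp [h]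
    have f0 := e3 x0; have f1 := e3 x1; have f2 := e3 x2; have f3 := e3 x3
    have g0 := hs3 x0; have g1 := hs3 x1; have g2 := hs3 x2; have g3 := hs3 x3
    set w0 := (x0+1)%3-1
    set w1 := (x1+1)%3-1
    set w2 := (x2+1)%3-1
    set w3 := (x3+1)%3-1
    set u0 := (x0+1)/3
    set u1 := (x1+1)/3
    set u2 := (x2+1)/3
    set u3 := (x3+1)/3
    clear_value w0 w1 w2 w3 u0 u1 u2 u3
    clear hsum hN hN0 b0 b1 b2 b3
    subst f0 f1 f2 f3
    refine Lam_descent (k := 3) hm c3 (by norm_num) ?_ (by rw [hk]; ring) h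
    unfold nf at hk ⊢
    have hk' : w0^2+w1^2+w2^2+w3^2 + 3*(2*(w0*u0+w1*u1+w2*u2+w3*u3)+3*(u0^2+u1^2+u2^2+u3^2)) = m*3 := by
      rw [← hk]; ring
    by_cases hz : w0^2+w1^2+w2^2+w3^2 = 0
    · exfalso
      have z0 : w0 = 0 := pow_eq_zero_iff (two_ne_zero) |>.mp (by linarith [sq_nonneg w1, sq_nonneg w2, sq_nonneg w3, sq_nonneg w0])
      have z1 : w1 = 0 := pow_eq_zero_iff (two_ne_zero) |>.mp (by linarith [sq_nonneg w1, sq_nonneg w2, sq_nonneg w3, sq_nonneg w0])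
      have z2 : w2 = 0 := pow_eq_zero_iff (two_ne_zero) |>.mp (by linarith [sq_nonneg w1, sq_nonneg w2, sq_nonneg w3, sq_nonneg w0])
      have z3 : w3 = 0 := pow_eq_zero_iff (two_ne_zero) |>.mp (by linarith [sq_nonneg w1, sq_nonneg w2, sq_nonneg w3, sq_nonneg w0])
      rw [z0, z1, z2, z3] at hk'
      apply hm3
      have : m = 3 * (u0^2+u1^2+u2^2+u3^2) := by linarith
      omega
    · omega
  · rw [hk] at hsum
    have : x0%2+x1%2+x2%2+x3%2 = 0 ∨ x0%2+x1%2+x2%2+x3%2 = 4 := by omega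
    rcases this with hz | hz
    · have f0 : x0 = 2 * (x0/2) := by omega
      have f1 : x1 = 2 * (x1/2) := by omega
      have f2 : x2 = 2 * (x2/2) := by omega
      have f3 : x3 = 2 * (x3/2) := by omega
      refine ⟨x0/2, x1/2, x2/2, x3/2, ?_, ?_⟩
      · rw [f0, f1, f2, f3] at hk
        unfold nf at hk ⊢
        linarith
      · apply Lam_div c2
        rw [← f0, ← f1, ← f2, ← f3]; exact h
    · have e4 : ∀ x : ℤ, x = ((x+1)%4-1) + 4 * ((x+1)/4) := by intro x; omega
      have hs4 : ∀ x : ℤ, x % 2 = 1 → ((x+1)%4-1)^2 = 1 := by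
        intro x hx
        have : (x+1)%4 = 0 ∨ (x+1)%4 = 2 := by omega
        rcases this with h | h <;> simp [h]
      refine Lam_descent (k := 4) (w0 := (x0+1)%4-1) (w1 := (x1+1)%4-1) (w2 := (x2+1)%4-1)
        (w3 := (x3+1)%4-1) (u0 := (x0+1)/4)
        (u1 := (x1+1)/4) (u2 := (x2+1)/4) (u3 := (x3+1)/4) hm c4 (by norm_num) ?_ ?_ ?_
      · unfold nf
        rw [hs4 x0 (by omega), hs4 x1 (by omega), hs4 x2 (by omega), hs4 x3 (by omega)]; norm_num
      · rw [← e4, ← e4, ← e4, ← e4, hk]; ring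
      · rw [← e4, ← e4, ← e4, ← e4]; exact h

lemma exists_ab (m : ℕ) (hm2 : m % 2 = 1) : ∃ a b : ℤ, (m:ℤ) ∣ a^2+b^2+1 := by
  have hcop : Nat.Coprime 4 m := by
    have : Nat.Coprime 2 m := (Nat.coprime_two_left).mpr (Nat.odd_iff.mpr hm2)
    exact Nat.Coprime.pow_left 2 this
  obtain ⟨u, hu1, hu2⟩ := Nat.chineseRemainder hcop 1 (m-1)
  have hm1 : 1 ≤ m := by omega
  have : NeZero (4*m) := ⟨by omega⟩
  have hmm : Nat.Coprime (m-1) m := by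
    have := (Nat.coprime_self_add_right (m := m-1) (n := 1)).mpr (Nat.coprime_one_right _)
    rwa [Nat.sub_add_cancel hm1] at this
  have hunit : IsUnit ((u : ℕ) : ZMod (4*m)) := by
    rw [ZMod.isUnit_iff_coprime]
    apply Nat.Coprime.mul_right
    · have := hu1.gcd_eq; rw [Nat.Coprime, this]; norm_num
    · have := hu2.gcd_eq; rw [Nat.Coprime, this]; exact hmm
  obtain ⟨p, -, hp, hpu⟩ := Nat.forall_exists_prime_gt_and_eq_mod hunit 0
  rw [ZMod.natCast_eq_natCast_iff] at hpu
  have h4 : p ≡ 1 [MOD 4] := (hpu.of_dvd (Dvd.intro _ rfl)).trans hu1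
  have hmp : p ≡ m - 1 [MOD m] := (hpu.of_dvd (Dvd.intro_left _ rfl)).trans hu2
  have := Fact.mk hp
  obtain ⟨a, b, hab⟩ := Nat.Prime.sq_add_sq (p := p) (by
    have : p % 4 = 1 := h4
    omega)
  refine ⟨a, b, ?_⟩
  have : (m:ℕ) ∣ a^2+b^2+1 := by
    rw [hab]
    have h5 := hmp.add_right 1
    rw [Nat.sub_add_cancel hm1] at h5
    exact (Nat.modEq_zero_iff_dvd).mp (h5.trans (by simp [Nat.ModEq]))
  exact_mod_cast this

lemma exists_Lam (m : ℕ) (hm : 0 < m) (a b v : ℤ) : ∃ x0 x1 x2 x3 : ℤ,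
    Lam m a b v x0 x1 x2 x3 ∧ 0 < nf x0 x1 x2 x3 ∧ nf x0 x1 x2 x3 ≤ 4 * m := by
  have : NeZero m := ⟨hm.ne'⟩
  set s := Nat.sqrt m with hs
  let φ : (Fin 4 → Fin (s+1)) → ZMod m × ZMod m := fun x =>
    ((((x 0:ℕ):ℤ)+a*((x 2:ℕ):ℤ)-b*((x 3:ℕ):ℤ) + v*(-((x 1:ℕ):ℤ)+b*((x 2:ℕ):ℤ)+a*((x 3:ℕ):ℤ)) : ℤ),
     (((x 1:ℕ):ℤ)+b*((x 2:ℕ):ℤ)+a*((x 3:ℕ):ℤ)+v*(((x 0:ℕ):ℤ)-a*((x 2:ℕ):ℤ)+b*((x 3:ℕ):ℤ)) : ℤ))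
  have hlt : m < (s+1)*(s+1) := Nat.lt_succ_sqrt m
  have hle : s * s ≤ m := Nat.sqrt_le m
  obtain ⟨x, y, hxy, hφ⟩ := Fintype.exists_ne_map_eq_of_card_lt φ (by
    simp [ZMod.card]
    nlinarith)
  simp only [φ, Prod.mk.injEq] at hφ
  obtain ⟨h1, h2⟩ := hφ
  rw [ZMod.intCast_eq_intCast_iff_dvd_sub] at h1 h2
  refine ⟨((y 0:ℕ):ℤ)-((x 0:ℕ):ℤ), ((y 1:ℕ):ℤ)-((x 1:ℕ):ℤ), ((y 2:ℕ):ℤ)-((x 2:ℕ):ℤ),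
    ((y 3:ℕ):ℤ)-((x 3:ℕ):ℤ), ⟨?_, ?_⟩, ?_, ?_⟩
  · convert h1 using 1; ring
  · convert h2 using 1; ring
  · obtain ⟨i, hi⟩ := Function.ne_iff.mp hxy
    have hi' : ((y i:ℕ):ℤ)-((x i:ℕ):ℤ) ≠ 0 := by
      intro h; apply hi; apply Fin.ext; omega
    have hp := sq_pos_of_ne_zero hi'
    have q : ∀ j, 0 ≤ (((y j:ℕ):ℤ)-((x j:ℕ):ℤ))^2 := fun j => sq_nonneg _
    have q0 := q 0; have q1 := q 1; have q2 := q 2; have q3 := q 3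
    unfold nf
    fin_cases i <;> simp only [Fin.zero_eta, Fin.mk_one, Fin.reduceFinMk] at hp <;> linarith
  · have q : ∀ j, (((y j:ℕ):ℤ)-((x j:ℕ):ℤ))^2 ≤ m := by
      intro j
      have hx := (x j).2; have hy := (y j).2
      have : |((y j:ℕ):ℤ)-((x j:ℕ):ℤ)| ≤ |(s:ℤ)| := by
        rw [abs_of_nonneg (a := (s:ℤ)) (by positivity), abs_le]; omega
      have h3 := sq_le_sq.mpr this
      have h4 : (s:ℤ)*s ≤ m := by exact_mod_cast hle
      nlinarith
    have q0 := q 0; have q1 := q 1; have q2 := q 2; have q3 := q 3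
    unfold nf
    linarith

lemma sphere_finite (n lam : ℕ) : {x : Fin n → ℤ | ∑ i, (x i) ^ 2 = (lam : ℤ)}.Finite := by
  apply (Set.finite_Icc (fun _ : Fin n => -(lam:ℤ)) (fun _ => (lam:ℤ))).subset
  intro x hx
  have hx' : ∑ i, (x i) ^ 2 = (lam : ℤ) := hx
  have : ∀ i, |x i| ≤ lam := by
    intro i
    have h1 : (x i)^2 ≤ lam := by
      rw [← hx']; exact Finset.single_le_sum (f := fun i => (x i)^2) (fun j _ => sq_nonneg _) (Finset.mem_univ i)
    by_contra hc
    push Not at hc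
    have := sq_abs (x i)
    have := abs_nonneg (x i)
    nlinarith
  exact ⟨fun i => (abs_le.mp (this i)).1, fun i => (abs_le.mp (this i)).2⟩

lemma four_lower (m : ℕ) (hm2 : m % 2 = 1) (hm3 : m % 3 ≠ 0) : m ≤ sphereCount 4 m := by
  have hm0 : 0 < m := by omega
  obtain ⟨a, b, hab⟩ := exists_ab m hm2
  have : ∀ v : ℕ, ∃ x : Fin 4 → ℤ, ∑ i, (x i)^2 = (m:ℤ) ∧ Lam m a b v (x 0) (x 1) (x 2) (x 3) := by
    intro v
    obtain ⟨x0, x1, x2, x3, hL, h0, h4⟩ := exists_Lam m hm0 a b v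
    obtain ⟨y0, y1, y2, y3, hN, hy⟩ := Lam_small hab (by exact_mod_cast hm0) (by omega) (by omega) hL h4 h0
    refine ⟨![y0, y1, y2, y3], ?_, hy⟩
    rw [← hN, Fin.sum_univ_four]; rfl
  choose F hF1 hF2 using this
  unfold sphereCount
  rw [Set.ncard_eq_toFinset_card _ (sphere_finite 4 m)]
  conv_lhs => rw [← Finset.card_range m]
  apply Finset.card_le_card_of_injOn F
  · intro v _
    simpa using hF1 v
  · intro v hv w hw hvw
    have hL := hF2 w
    rw [← hvw] at hL
    have hd := Lam_inj hab (by exact_mod_cast hm0) ⟨1, -((m:ℤ)/2), by omega⟩ (hF2 v) hL (by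
      rw [← hF1 v, Fin.sum_univ_four]; rfl)
    simp at hv hw
    have := Int.eq_zero_of_abs_lt_dvd hd (by rw [abs_lt]; omega)
    omega

lemma sphere_succ (n lam : ℕ) (T : Finset ℕ) (hT : ∀ m ∈ T, m^2 ≤ lam) :
    ∑ m ∈ T, sphereCount n (lam - m^2) ≤ sphereCount (n+1) lam := by
  have e : ∑ m ∈ T, sphereCount n (lam - m^2) = (T.sigma fun m => (sphere_finite n (lam - m^2)).toFinset).card := by
    rw [Finset.card_sigma]
    refine Finset.sum_congr rfl fun m _ => ?_
    unfold sphereCount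
    rw [Set.ncard_eq_toFinset_card _ (sphere_finite n _)]
  rw [e]
  unfold sphereCount
  rw [Set.ncard_eq_toFinset_card _ (sphere_finite (n+1) lam)]
  apply Finset.card_le_card_of_injOn (fun p => (Fin.cons (p.1:ℤ) p.2 : Fin (n+1) → ℤ))
  · rintro ⟨m, x⟩ hp
    simp only [Finset.coe_sigma, Set.mem_sigma_iff, Finset.mem_coe, Set.Finite.mem_toFinset, Set.mem_ofPred_eq] at hp ⊢
    rw [Fin.sum_univ_succ]
    simp only [Fin.cons_zero, Fin.cons_succ]
    have := hT m hp.1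
    rw [hp.2]; push_cast [this]; ring
  · rintro ⟨m, x⟩ _ ⟨m', x'⟩ _ h
    simp only [Fin.cons_inj] at h
    obtain ⟨h1, h2⟩ := h
    have : m = m' := by exact_mod_cast h1
    subst this; subst h2; rfl

lemma sqrt_half_lt (lam : ℕ) : (lam : ℝ) / 2 ≤ ((Nat.sqrt (lam/2) : ℝ) + 1)^2 := by
  have h := Nat.lt_succ_sqrt (lam/2)
  have h2 : lam ≤ 2 * ((Nat.sqrt (lam/2) + 1) * (Nat.sqrt (lam/2) + 1)) := by
    simp only [Nat.succ_eq_add_one] at h; omega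
  have h3 : (lam:ℝ) ≤ 2 * (((Nat.sqrt (lam/2) : ℝ) + 1) * ((Nat.sqrt (lam/2) : ℝ) + 1)) := by exact_mod_cast h2
  nlinarith

lemma five_pos (lam : ℕ) : 1 ≤ sphereCount 5 lam := by
  obtain ⟨a, b, c, d, h⟩ := Nat.sum_four_squares lam
  unfold sphereCount
  rw [Nat.succ_le_iff, Set.ncard_pos (sphere_finite 5 lam)]
  refine ⟨![a, b, c, d, 0], ?_⟩
  simp only [Set.mem_ofPred_eq, Fin.sum_univ_five]
  rw [← h]; simp

lemma five_lower (lam : ℕ) (hlam : 1 ≤ lam) : (1/729:ℝ) * (Real.sqrt lam)^3 ≤ sphereCount 5 lam := by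
  set s := Nat.sqrt (lam/2) with hs
  have hss : s * s ≤ lam/2 := Nat.sqrt_le _
  have hr := sqrt_half_lt lam
  rw [← hs] at hr
  have hR : (0:ℝ) ≤ Real.sqrt lam := Real.sqrt_nonneg _
  have hRsq : Real.sqrt lam ^ 2 = lam := Real.sq_sqrt (by positivity)
  by_cases h6 : s < 6
  · have h1 : (1:ℝ) ≤ sphereCount 5 lam := by exact_mod_cast five_pos lam
    have h2 : (s:ℝ) + 1 ≤ 6 := by exact_mod_cast h6
    have h3 : Real.sqrt lam ≤ 9 := by
      apply Real.sqrt_le_iff.mpr ⟨by norm_num, by nlinarith [(Nat.cast_nonneg s : (0:ℝ) ≤ s)]⟩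
    have : Real.sqrt lam ^ 3 ≤ 9^3 := pow_le_pow_left₀ hR h3 3
    linarith
  · push Not at h6
    obtain ⟨ρ, hρ5, hρ⟩ : ∃ ρ : ℕ, ρ ≤ 5 ∧ ∀ j : ℕ, ((lam:ℤ) - (6*j+ρ)^2) % 2 = 1 ∧ ((lam:ℤ) - (6*j+ρ)^2) % 3 ≠ 0 := by
      have key : ∀ ρ : ℕ, ((lam:ℤ) - ρ^2) % 2 = 1 → ((lam:ℤ) - ρ^2) % 3 ≠ 0 → ∀ j : ℕ, ((lam:ℤ) - (6*j+ρ)^2) % 2 = 1 ∧ ((lam:ℤ) - (6*j+ρ)^2) % 3 ≠ 0 := by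
        intro ρ h1 h2 j
        have : ((lam:ℤ) - (6*j+ρ)^2) = ((lam:ℤ) - ρ^2) - 6 * (6*j^2+2*j*ρ) := by ring
        rw [this]; omega
      have h : lam % 6 = 0 ∨ lam % 6 = 1 ∨ lam % 6 = 2 ∨ lam % 6 = 3 ∨ lam % 6 = 4 ∨ lam % 6 = 5 := by omega
      rcases h with h | h | h | h | h | h
      · exact ⟨1, by norm_num, key 1 (by norm_num; omega) (by norm_num; omega)⟩
      · exact ⟨0, by norm_num, key 0 (by norm_num; omega) (by norm_num; omega)⟩
      · exact ⟨3, by norm_num, key 3 (by norm_num; omega) (by norm_num; omega)⟩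
      · exact ⟨2, by norm_num, key 2 (by norm_num; omega) (by norm_num; omega)⟩
      · exact ⟨3, by norm_num, key 3 (by norm_num; omega) (by norm_num; omega)⟩
      · exact ⟨0, by norm_num, key 0 (by norm_num; omega) (by norm_num; omega)⟩
    have hsq : ∀ j ∈ Finset.range (s/6), (6*j+ρ)^2 ≤ lam/2 := by
      intro j hj
      rw [Finset.mem_range] at hj
      have : 6*j+ρ ≤ s := by omega
      nlinarith
    have h1 := sphere_succ 4 lam ((Finset.range (s/6)).image fun j => 6*j+ρ) (by
      intro m hm
      simp only [Finset.mem_image] at hm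
      obtain ⟨j, hj, rfl⟩ := hm
      have := hsq j hj; omega)
    rw [Finset.sum_image (by intro a _ b _ h; simp at h; exact h)] at h1
    have h2 : ∑ j ∈ Finset.range (s/6), (lam - lam/2) ≤ ∑ j ∈ Finset.range (s/6), sphereCount 4 (lam - (6*j+ρ)^2) := by
      apply Finset.sum_le_sum
      intro j hj
      have hq := hsq j hj
      have hc : ((lam - (6*j+ρ)^2 : ℕ):ℤ) = (lam:ℤ) - (6*j+ρ)^2 := by
        rw [Nat.cast_sub (by omega)]; push_cast; ring
      have hh := hρ j
      rw [← hc] at hh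
      refine le_trans ?_ (four_lower _ (by omega) (by omega))
      omega
    rw [Finset.sum_const, Finset.card_range, smul_eq_mul] at h2
    have h3 : (s+1) * lam ≤ 24 * sphereCount 5 lam := by
      have h4 : s + 1 ≤ 12 * (s/6) := by omega
      have h5 : lam ≤ 2 * (lam - lam/2) := by omega
      calc (s+1) * lam ≤ (12 * (s/6)) * (2 * (lam - lam/2)) := Nat.mul_le_mul h4 h5
        _ = 24 * ((s/6) * (lam - lam/2)) := by ring
        _ ≤ _ := Nat.mul_le_mul_left 24 (h2.trans h1)
    have h4 : ((s:ℝ)+1) * lam ≤ 24 * sphereCount 5 lam := by exact_mod_cast h3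
    have h5 : Real.sqrt lam ≤ 2 * ((s:ℝ)+1) := by
      apply Real.sqrt_le_iff.mpr ⟨by positivity, by nlinarith⟩
    have h6 : Real.sqrt lam ^ 3 = Real.sqrt lam * lam := by rw [pow_succ, hRsq]; ring
    rw [h6]
    have h7 : Real.sqrt lam * lam ≤ (2 * ((s:ℝ)+1)) * lam := mul_le_mul_of_nonneg_right h5 (by positivity)
    have : (0:ℝ) ≤ sphereCount 5 lam := by positivity
    linarith

lemma sphere_lower (n : ℕ) (hn : 5 ≤ n) : ∃ c : ℝ, 0 < c ∧ ∀ lam : ℕ, 1 ≤ lam →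
    c * (Real.sqrt lam)^(n-2) ≤ sphereCount n lam := by
  induction n, hn using Nat.le_induction with
  | base => exact ⟨1/729, by norm_num, fun lam h => five_lower lam h⟩
  | succ n hn ih =>
    obtain ⟨c, hc, ih⟩ := ih
    refine ⟨c * (1/2)^(n-1), by positivity, fun lam hlam => ?_⟩
    set s := Nat.sqrt (lam/2) with hs
    have hss : s * s ≤ lam/2 := Nat.sqrt_le _
    have hr := sqrt_half_lt lam
    rw [← hs] at hr
    have hsq : ∀ m ∈ Finset.range (s+1), m^2 ≤ lam/2 := by
      intro m hm
      rw [Finset.mem_range] at hm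
      nlinarith
    have h1 := sphere_succ n lam (Finset.range (s+1)) (by
      intro m hm
      have := hsq m hm; omega)
    have h1' : ∑ m ∈ Finset.range (s+1), (sphereCount n (lam - m^2) : ℝ) ≤ sphereCount (n+1) lam := by exact_mod_cast h1
    refine le_trans ?_ h1'
    have hR : (0:ℝ) ≤ Real.sqrt lam := Real.sqrt_nonneg _
    have hRsq : Real.sqrt lam ^ 2 = lam := Real.sq_sqrt (by positivity)
    have h2 : ∑ m ∈ Finset.range (s+1), (c * (1/2 * Real.sqrt lam)^(n-2)) ≤ ∑ m ∈ Finset.range (s+1), (sphereCount n (lam - m^2) : ℝ) := by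
      apply Finset.sum_le_sum
      intro m hm
      have hq := hsq m hm
      refine le_trans ?_ (ih (lam - m^2) (by omega))
      apply mul_le_mul_of_nonneg_left _ hc.le
      apply pow_le_pow_left₀ (by positivity)
      apply Real.le_sqrt_of_sq_le
      have h3 : lam ≤ 2 * (lam - m^2) := by omega
      have h4 : (lam:ℝ) ≤ 2 * ((lam - m^2 : ℕ):ℝ) := by exact_mod_cast h3
      nlinarith
    refine le_trans ?_ h2
    rw [Finset.sum_const, Finset.card_range, nsmul_eq_mul]
    have h5 : 1/2 * Real.sqrt lam ≤ (s:ℝ)+1 := by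
      have : Real.sqrt lam ≤ 2 * ((s:ℝ)+1) := by
        apply Real.sqrt_le_iff.mpr ⟨by positivity, by nlinarith⟩
      linarith
    have e1 : n + 1 - 2 = (n-2) + 1 := by omega
    have e2 : n - 1 = (n-2) + 1 := by omega
    rw [e1, e2, mul_assoc, ← mul_pow, pow_succ]
    push_cast
    calc c * ((1/2 * Real.sqrt lam)^(n-2) * (1/2 * Real.sqrt lam)) = (1/2 * Real.sqrt lam) * (c * (1/2 * Real.sqrt lam)^(n-2)) := by ring
      _ ≤ _ := mul_le_mul_of_nonneg_right h5 (by positivity)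

/-- the divisor kernel -/
def kap (N : ℕ) (m k : ℤ) : ℝ := ∑ c ∈ Finset.Icc 1 N, if (c:ℤ) ∣ m^2 - k^2 then (c:ℝ)^(-(1/2:ℝ)) else 0

lemma kap_nonneg (N : ℕ) (m k : ℤ) : 0 ≤ kap N m k :=
  Finset.sum_nonneg fun c _ => by split_ifs <;> positivity

lemma kap_comm (N : ℕ) (m k : ℤ) : kap N m k = kap N k m := by
  unfold kap
  refine Finset.sum_congr rfl fun c _ => ?_
  simp only [dvd_sub_comm]

/-- partial sums of a convergent p-series are bounded -/
lemma psum_bound (s : ℝ) (hs : 1 < s) : ∃ Z : ℝ, 0 < Z ∧ ∀ N : ℕ, ∑ c ∈ Finset.Icc 1 N, (c:ℝ)^(-s) ≤ Z := by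
  have h := Real.summable_nat_rpow.mpr (show -s < -1 by linarith)
  refine ⟨(∑' n : ℕ, (n:ℝ)^(-s)) + 1, ?_, fun N => ?_⟩
  · have : 0 ≤ ∑' n : ℕ, (n:ℝ)^(-s) := tsum_nonneg fun n => by positivity
    linarith
  · have := h.sum_le_tsum (Finset.Icc 1 N) (fun i _ => by positivity)
    linarith

lemma kap_holder : ∃ K : ℝ, 0 < K ∧ ∀ (N : ℕ) (m k : ℤ), (Real.sqrt (kap N m k))^3 ≤
    K * ∑ c ∈ Finset.Icc 1 N, if (c:ℤ) ∣ m^2 - k^2 then (c:ℝ)^(-(1/8:ℝ)) else 0 := by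
  obtain ⟨Z, hZ, hb⟩ := psum_bound (5/4) (by norm_num)
  refine ⟨Z^(1/2:ℝ), by positivity, fun N m k => ?_⟩
  set T := (Finset.Icc 1 N).filter (fun c : ℕ => (c:ℤ) ∣ m^2 - k^2) with hT
  rw [← Finset.sum_filter]
  have h1 : kap N m k ≤ Z^(1/3:ℝ) * (∑ c ∈ T, (c:ℝ)^(-(1/8:ℝ)))^(2/3:ℝ) := by
    unfold kap
    rw [← Finset.sum_filter]
    have hH := Real.inner_le_Lp_mul_Lq_of_nonneg T (f := fun c : ℕ => (c:ℝ)^(-(5/12:ℝ))) (g := fun c : ℕ => (c:ℝ)^(-(1/12:ℝ)))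
      (p := 3) (q := 3/2) (by constructor <;> norm_num) (fun i _ => by positivity) (fun i _ => by positivity)
    have e0 : ∑ c ∈ T, (c:ℝ)^(-(1/2:ℝ)) = ∑ c ∈ T, (c:ℝ)^(-(5/12:ℝ)) * (c:ℝ)^(-(1/12:ℝ)) := by
      refine Finset.sum_congr rfl fun c hc => ?_
      have : 1 ≤ c := (Finset.mem_Icc.mp (Finset.mem_filter.mp hc).1).1
      have : (0:ℝ) < c := by exact_mod_cast this
      rw [← Real.rpow_add this]; norm_num
    rw [e0]
    refine hH.trans ?_
    have e1 : ∑ c ∈ T, ((c:ℝ)^(-(5/12:ℝ)))^(3:ℝ) = ∑ c ∈ T, (c:ℝ)^(-(5/4:ℝ)) := by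
      refine Finset.sum_congr rfl fun c hc => ?_
      rw [← Real.rpow_mul (by positivity)]; norm_num
    have e2 : ∑ c ∈ T, ((c:ℝ)^(-(1/12:ℝ)))^(3/2:ℝ) = ∑ c ∈ T, (c:ℝ)^(-(1/8:ℝ)) := by
      refine Finset.sum_congr rfl fun c hc => ?_
      rw [← Real.rpow_mul (by positivity)]; norm_num
    rw [e1, e2, show (1 / (3/2) : ℝ) = 2/3 by norm_num]
    apply mul_le_mul_of_nonneg_right _ (by positivity)
    apply Real.rpow_le_rpow (Finset.sum_nonneg fun i _ => by positivity) _ (by norm_num)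
    refine le_trans ?_ (hb N)
    exact Finset.sum_le_sum_of_subset_of_nonneg (Finset.filter_subset _ _) (fun i _ _ => by positivity)
  have hS : 0 ≤ ∑ c ∈ T, (c:ℝ)^(-(1/8:ℝ)) := Finset.sum_nonneg fun i _ => by positivity
  have h0 := kap_nonneg N m k
  calc (Real.sqrt (kap N m k))^3 = (kap N m k)^(3/2:ℝ) := by
        rw [Real.sqrt_eq_rpow, ← Real.rpow_natCast, ← Real.rpow_mul h0]; norm_num
    _ ≤ (Z^(1/3:ℝ) * (∑ c ∈ T, (c:ℝ)^(-(1/8:ℝ)))^(2/3:ℝ))^(3/2:ℝ) := Real.rpow_le_rpow h0 h1 (by norm_num)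
    _ = _ := by
        rw [Real.mul_rpow (by positivity) (by positivity), ← Real.rpow_mul hZ.le, ← Real.rpow_mul hS]
        norm_num
        exact Or.inl rfl

lemma count_cong (N e f : ℕ) (m : ℤ) (he : 1 ≤ e) (hf : 1 ≤ f) (hef : e * f ≤ N) :
    (((Finset.Icc (-(N:ℤ)) N).filter (fun k : ℤ => (e:ℤ) ∣ m - k ∧ (f:ℤ) ∣ m + k)).card : ℝ) ≤
      5 * N * (Nat.gcd e f : ℝ) / (e * f) := by
  set S := (Finset.Icc (-(N:ℤ)) N).filter (fun k : ℤ => (e:ℤ) ∣ m - k ∧ (f:ℤ) ∣ m + k) with hS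
  set L := Nat.lcm e f with hL
  have hLpos : 0 < L := Nat.lcm_pos he hf
  have hLN : L ≤ N := (Nat.le_of_dvd (by positivity) (Nat.lcm_dvd_mul e f)).trans hef
  have hgl : (Nat.gcd e f : ℝ) * L = e * f := by exact_mod_cast Nat.gcd_mul_lcm e f
  have he' : (0:ℝ) < e := by exact_mod_cast he
  have hf' : (0:ℝ) < f := by exact_mod_cast hf
  have hL' : (0:ℝ) < L := by exact_mod_cast hLpos
  have e1 : 5 * N * (Nat.gcd e f : ℝ) / (e * f) = 5 * N / L := by
    have hg : (0:ℝ) < Nat.gcd e f := by exact_mod_cast Nat.gcd_pos_of_pos_left f he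
    rw [← hgl]; field_simp
  rw [e1]
  rcases S.eq_empty_or_nonempty with h | ⟨k0, hk0⟩
  · rw [h]; simp; positivity
  · have hdv : ∀ k ∈ S, (L:ℤ) ∣ k - k0 := by
      intro k hk
      rw [hS, Finset.mem_filter] at hk hk0
      have h1 : (e:ℤ) ∣ k - k0 := by
        have := dvd_sub hk0.2.1 hk.2.1; ring_nf at this ⊢; exact this
      have h2 : (f:ℤ) ∣ k - k0 := by
        have := dvd_sub hk.2.2 hk0.2.2; ring_nf at this ⊢; exact this
      rw [Int.natCast_dvd] at h1 h2 ⊢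
      exact Nat.lcm_dvd h1 h2
    have hc : S.card ≤ (Finset.Icc (-((2*N/L : ℕ):ℤ)) ((2*N/L : ℕ):ℤ)).card := by
      apply Finset.card_le_card_of_injOn (fun k => (k - k0)/L)
      · intro k hk
        obtain ⟨t, ht⟩ := hdv k hk
        have hb := (Finset.mem_filter.mp hk).1
        have hb0 := (Finset.mem_filter.mp hk0).1
        rw [Finset.mem_Icc] at hb hb0
        have hLz : (0:ℤ) < L := by exact_mod_cast hLpos
        have ht' : |t| * L ≤ 2 * N := by
          rw [← abs_of_pos hLz, ← abs_mul, mul_comm t, ← ht, abs_le]; constructor <;> linarith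
        have : |t| ≤ ((2*N/L : ℕ):ℤ) := by
          push_cast
          exact (Int.le_ediv_iff_mul_le hLz).mpr ht'
        simp only [Finset.coe_Icc, Set.mem_Icc]
        rw [ht, Int.mul_ediv_cancel_left _ hLz.ne']
        exact abs_le.mp this
      · intro k hk k' hk' h
        obtain ⟨t, ht⟩ := hdv k hk
        obtain ⟨t', ht'⟩ := hdv k' hk'
        have hLz : (L:ℤ) ≠ 0 := by exact_mod_cast hLpos.ne'
        simp only [ht, ht', Int.mul_ediv_cancel_left _ hLz] at h
        rw [h] at ht; linarith
    have hc2 : S.card ≤ 2 * (2*N/L) + 1 := by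
      refine hc.trans ?_
      rw [Int.card_Icc]; omega
    have h3 : ((2*N/L : ℕ):ℝ) ≤ 2*N/L := by
      have := @Nat.cast_div_le ℝ _ _ _ (2*N) L
      push_cast at this; exact this
    have h4 : (1:ℝ) ≤ N / L := by
      rw [le_div_iff₀ hL', one_mul]; exact_mod_cast hLN
    have h5 : (S.card : ℝ) ≤ 2 * ((2*N/L : ℕ):ℝ) + 1 := by exact_mod_cast hc2
    calc (S.card : ℝ) ≤ 2 * ((2*N/L : ℕ):ℝ) + 1 := h5
      _ ≤ 2 * (2*N/L) + N/L := by linarith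
      _ = _ := by ring

lemma gcd_sum : ∃ K : ℝ, 0 < K ∧ ∀ N : ℕ, ∑ e ∈ Finset.Icc 1 N, ∑ f ∈ Finset.Icc 1 N,
    (Nat.gcd e f : ℝ) * ((e:ℝ)^(-(9/8:ℝ)) * (f:ℝ)^(-(9/8:ℝ))) ≤ K := by
  obtain ⟨Z, hZ, hb⟩ := psum_bound (9/8) (by norm_num)
  obtain ⟨Y, hY, hc⟩ := psum_bound (5/4) (by norm_num)
  refine ⟨Z^2 * Y, by positivity, fun N => ?_⟩
  have h1 : ∀ e ∈ Finset.Icc 1 N, ∀ f ∈ Finset.Icc 1 N, (Nat.gcd e f : ℝ) ≤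
      ∑ h ∈ Finset.Icc 1 N, if h ∣ e ∧ h ∣ f then (h:ℝ) else 0 := by
    intro e he f hf
    rw [Finset.mem_Icc] at he hf
    have := Finset.single_le_sum (f := fun h : ℕ => if h ∣ e ∧ h ∣ f then (h:ℝ) else 0) (s := Finset.Icc 1 N)
      (fun i _ => by split_ifs <;> positivity) (a := Nat.gcd e f) (by
        rw [Finset.mem_Icc]
        exact ⟨Nat.gcd_pos_of_pos_left f he.1, (Nat.gcd_le_left f he.1).trans he.2⟩)
    simpa [Nat.gcd_dvd_left, Nat.gcd_dvd_right] using this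
  have hmul : ∀ h ∈ Finset.Icc 1 N, ∑ e ∈ Finset.Icc 1 N, (if h ∣ e then (e:ℝ)^(-(9/8:ℝ)) else 0) ≤ (h:ℝ)^(-(9/8:ℝ)) * Z := by
    intro h hh
    rw [Finset.mem_Icc] at hh
    rw [← Finset.sum_filter]
    calc ∑ e ∈ (Finset.Icc 1 N).filter (fun e => h ∣ e), (e:ℝ)^(-(9/8:ℝ))
        ≤ ∑ e ∈ (Finset.Icc 1 N).image (fun e => h * e), (e:ℝ)^(-(9/8:ℝ)) := by
          apply Finset.sum_le_sum_of_subset_of_nonneg _ (fun i _ _ => by positivity)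
          intro e he
          rw [Finset.mem_filter, Finset.mem_Icc] at he
          obtain ⟨⟨h1, h2⟩, t, rfl⟩ := he
          rw [Finset.mem_image]
          refine ⟨t, ?_, rfl⟩
          rw [Finset.mem_Icc]
          constructor
          · by_contra hc
            have : t = 0 := by omega
            subst this; simp at h1
          · nlinarith
      _ = ∑ e ∈ Finset.Icc 1 N, (h:ℝ)^(-(9/8:ℝ)) * (e:ℝ)^(-(9/8:ℝ)) := by
          rw [Finset.sum_image (by
            intro a _ b _ hab
            exact Nat.eq_of_mul_eq_mul_left hh.1 hab)]
          refine Finset.sum_congr rfl fun e _ => ?_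
          push_cast
          rw [Real.mul_rpow (by positivity) (by positivity)]
      _ ≤ _ := by
          rw [← Finset.mul_sum]
          exact mul_le_mul_of_nonneg_left (hb N) (by positivity)
  calc _ ≤ ∑ e ∈ Finset.Icc 1 N, ∑ f ∈ Finset.Icc 1 N,
      (∑ h ∈ Finset.Icc 1 N, if h ∣ e ∧ h ∣ f then (h:ℝ) else 0) * ((e:ℝ)^(-(9/8:ℝ)) * (f:ℝ)^(-(9/8:ℝ))) := by
        refine Finset.sum_le_sum fun e he => Finset.sum_le_sum fun f hf => ?_
        exact mul_le_mul_of_nonneg_right (h1 e he f hf) (by positivity)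
    _ = ∑ h ∈ Finset.Icc 1 N, (h:ℝ) * ((∑ e ∈ Finset.Icc 1 N, (if h ∣ e then (e:ℝ)^(-(9/8:ℝ)) else 0)) *
        (∑ f ∈ Finset.Icc 1 N, (if h ∣ f then (f:ℝ)^(-(9/8:ℝ)) else 0))) := by
        simp_rw [Finset.sum_mul_sum, Finset.mul_sum, Finset.sum_mul]
        rw [Finset.sum_congr rfl (fun e _ => Finset.sum_comm)]
        rw [Finset.sum_comm]
        refine Finset.sum_congr rfl fun h _ => Finset.sum_congr rfl fun e _ => Finset.sum_congr rfl fun f _ => ?_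
        by_cases h1 : h ∣ e <;> by_cases h2 : h ∣ f <;> simp [h1, h2]
    _ ≤ ∑ h ∈ Finset.Icc 1 N, Z^2 * (h:ℝ)^(-(5/4:ℝ)) := by
        refine Finset.sum_le_sum fun h hh => ?_
        have hm := hmul h hh
        have hpos : (0:ℝ) < h := by exact_mod_cast (Finset.mem_Icc.mp hh).1
        have h0 : 0 ≤ ∑ e ∈ Finset.Icc 1 N, (if h ∣ e then (e:ℝ)^(-(9/8:ℝ)) else 0) :=
          Finset.sum_nonneg fun e _ => by split_ifs <;> positivity
        have e1 : (h:ℝ) * ((h:ℝ)^(-(9/8:ℝ)) * (h:ℝ)^(-(9/8:ℝ))) = (h:ℝ)^(-(5/4:ℝ)) := by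
          rw [← Real.rpow_add hpos]
          nth_rw 1 [← Real.rpow_one (h:ℝ)]
          rw [← Real.rpow_add hpos]; norm_num
        calc _ ≤ (h:ℝ) * (((h:ℝ)^(-(9/8:ℝ)) * Z) * ((h:ℝ)^(-(9/8:ℝ)) * Z)) :=
              mul_le_mul_of_nonneg_left (mul_le_mul hm hm h0 (by positivity)) hpos.le
          _ = Z^2 * ((h:ℝ) * ((h:ℝ)^(-(9/8:ℝ)) * (h:ℝ)^(-(9/8:ℝ)))) := by ring
          _ = _ := by rw [e1]
    _ ≤ _ := by
        rw [← Finset.mul_sum]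
        exact mul_le_mul_of_nonneg_left (hc N) (by positivity)

lemma kap_sum : ∃ K : ℝ, 0 < K ∧ ∀ (N : ℕ) (m : ℤ),
    ∑ k ∈ Finset.Icc (-(N:ℤ)) N, (Real.sqrt (kap N m k))^3 ≤ K * N := by
  obtain ⟨K1, hK1, h1⟩ := kap_holder
  obtain ⟨K2, hK2, h2⟩ := gcd_sum
  refine ⟨K1 * (5 * K2), by positivity, fun N m => ?_⟩
  have step : ∀ k : ℤ, (∑ c ∈ Finset.Icc 1 N, if (c:ℤ) ∣ m^2 - k^2 then (c:ℝ)^(-(1/8:ℝ)) else 0) ≤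
      ∑ e ∈ Finset.Icc 1 N, ∑ f ∈ Finset.Icc 1 N, if e * f ≤ N ∧ ((e:ℤ) ∣ m - k ∧ (f:ℤ) ∣ m + k) then
        ((e:ℝ)^(-(1/8:ℝ)) * (f:ℝ)^(-(1/8:ℝ))) else 0 := by
    intro k
    have hex : ∀ c : ℕ, ∃ p : ℕ × ℕ, ((c:ℤ) ∣ m^2 - k^2 → p.1 * p.2 = c ∧ (p.1:ℤ) ∣ m - k ∧ (p.2:ℤ) ∣ m + k) := by
      intro c
      by_cases hc : (c:ℤ) ∣ m^2 - k^2
      · have hc' : c ∣ (m-k).natAbs * (m+k).natAbs := by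
          rw [← Int.natAbs_mul, ← Int.natCast_dvd]
          convert hc using 1; ring
        obtain ⟨e, f, he, hf, hef⟩ := exists_dvd_and_dvd_of_dvd_mul hc'
        exact ⟨(e, f), fun _ => ⟨hef.symm, Int.natCast_dvd.mpr he, Int.natCast_dvd.mpr hf⟩⟩
      · exact ⟨(0,0), fun h => absurd h hc⟩
    choose p hp using hex
    rw [← Finset.sum_product', ← Finset.sum_filter, ← Finset.sum_filter]
    set T := (Finset.Icc 1 N).filter (fun c : ℕ => (c:ℤ) ∣ m^2 - k^2)
    calc ∑ c ∈ T, (c:ℝ)^(-(1/8:ℝ)) = ∑ c ∈ T, (((p c).1:ℝ)^(-(1/8:ℝ)) * ((p c).2:ℝ)^(-(1/8:ℝ))) := by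
          refine Finset.sum_congr rfl fun c hc => ?_
          have := (hp c (Finset.mem_filter.mp hc).2).1
          rw [← Real.mul_rpow (by positivity) (by positivity)]
          congr 1; exact_mod_cast this.symm
      _ = ∑ q ∈ T.image p, ((q.1:ℝ)^(-(1/8:ℝ)) * (q.2:ℝ)^(-(1/8:ℝ))) := by
          rw [Finset.sum_image]
          intro a ha b hb hab
          have h3 := (hp a (Finset.mem_filter.mp ha).2).1
          have h4 := (hp b (Finset.mem_filter.mp hb).2).1
          rw [← h3, ← h4, hab]
      _ ≤ _ := by
          apply Finset.sum_le_sum_of_subset_of_nonneg _ (fun i _ _ => by positivity)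
          intro q hq
          rw [Finset.mem_image] at hq
          obtain ⟨c, hc, rfl⟩ := hq
          have hc1 := Finset.mem_Icc.mp (Finset.mem_filter.mp hc).1
          obtain ⟨h3, h4, h5⟩ := hp c (Finset.mem_filter.mp hc).2
          rw [Finset.mem_filter, Finset.mem_product, Finset.mem_Icc, Finset.mem_Icc]
          have hpos : 0 < (p c).1 * (p c).2 := by omega
          have p1 : 0 < (p c).1 := Nat.pos_of_mul_pos_right hpos
          have p2 : 0 < (p c).2 := Nat.pos_of_mul_pos_left hpos
          refine ⟨⟨⟨p1, ?_⟩, ⟨p2, ?_⟩⟩, by omega, h4, h5⟩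
          · nlinarith
          · nlinarith
  calc _ ≤ ∑ k ∈ Finset.Icc (-(N:ℤ)) N, K1 * ∑ e ∈ Finset.Icc 1 N, ∑ f ∈ Finset.Icc 1 N, (if e * f ≤ N ∧ ((e:ℤ) ∣ m - k ∧ (f:ℤ) ∣ m + k) then
        ((e:ℝ)^(-(1/8:ℝ)) * (f:ℝ)^(-(1/8:ℝ))) else 0) := by
        refine Finset.sum_le_sum fun k _ => (h1 N m k).trans ?_
        exact mul_le_mul_of_nonneg_left (step k) hK1.le
    _ = K1 * ∑ e ∈ Finset.Icc 1 N, ∑ f ∈ Finset.Icc 1 N, ∑ k ∈ Finset.Icc (-(N:ℤ)) N, (if e * f ≤ N ∧ ((e:ℤ) ∣ m - k ∧ (f:ℤ) ∣ m + k) then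
        ((e:ℝ)^(-(1/8:ℝ)) * (f:ℝ)^(-(1/8:ℝ))) else 0) := by
        rw [← Finset.mul_sum, Finset.sum_comm]
        congr 1
        refine Finset.sum_congr rfl fun e _ => Finset.sum_comm
    _ ≤ K1 * ∑ e ∈ Finset.Icc 1 N, ∑ f ∈ Finset.Icc 1 N, (5 * N) * ((Nat.gcd e f : ℝ) * ((e:ℝ)^(-(9/8:ℝ)) * (f:ℝ)^(-(9/8:ℝ)))) := by
        apply mul_le_mul_of_nonneg_left _ hK1.le
        refine Finset.sum_le_sum fun e he => Finset.sum_le_sum fun f hf => ?_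
        rw [Finset.mem_Icc] at he hf
        have he' : (0:ℝ) < e := by exact_mod_cast he.1
        have hf' : (0:ℝ) < f := by exact_mod_cast hf.1
        by_cases hef : e * f ≤ N
        · simp only [hef, true_and]
          rw [← Finset.sum_filter, Finset.sum_const, nsmul_eq_mul]
          have := count_cong N e f m he.1 hf.1 hef
          have e1 : ∀ x : ℝ, 0 < x → x^(-(9/8:ℝ)) = x⁻¹ * x^(-(1/8:ℝ)) := by
            intro x hx
            rw [← Real.rpow_neg_one, ← Real.rpow_add hx]; norm_num
          rw [e1 _ he', e1 _ hf']
          refine (mul_le_mul_of_nonneg_right this (by positivity)).trans (le_of_eq ?_)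
          field_simp
        · simp only [hef, false_and, if_false, Finset.sum_const_zero]
          positivity
    _ = K1 * (5 * N * ∑ e ∈ Finset.Icc 1 N, ∑ f ∈ Finset.Icc 1 N, ((Nat.gcd e f : ℝ) * ((e:ℝ)^(-(9/8:ℝ)) * (f:ℝ)^(-(9/8:ℝ))))) := by
        simp_rw [Finset.mul_sum]
    _ ≤ K1 * (5 * N * K2) := by
        apply mul_le_mul_of_nonneg_left _ hK1.le
        exact mul_le_mul_of_nonneg_left (h2 N) (by positivity)
    _ = _ := by ring

lemma kap_bilinear : ∃ K : ℝ, 0 < K ∧ ∀ (N : ℕ) (g : ℤ → ℝ), (∀ m, 0 ≤ g m) → ∀ A : ℝ, 0 ≤ A →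
    ∑ m ∈ Finset.Icc (-(N:ℤ)) N, (g m)^3 ≤ A * N →
    ∑ m ∈ Finset.Icc (-(N:ℤ)) N, ∑ k ∈ Finset.Icc (-(N:ℤ)) N, (g m)^2 * (g k)^2 * kap N m k ≤ (A^2 + K * A) * N^2 := by
  obtain ⟨K, hK, h⟩ := kap_sum
  refine ⟨K, hK, fun N g hg A hA hgA => ?_⟩
  set B := Finset.Icc (-(N:ℤ)) N
  have young : ∀ x y z : ℝ, 0 ≤ x → 0 ≤ y → 0 ≤ z → x * y * z ≤ (x^3+y^3+z^3)/3 := by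
    intro x y z hx hy hz
    nlinarith [mul_nonneg (add_nonneg (add_nonneg hx hy) hz) (add_nonneg (add_nonneg (sq_nonneg (x-y)) (sq_nonneg (y-z))) (sq_nonneg (x-z)))]
  have pt : ∀ m k, (g m)^2 * (g k)^2 * kap N m k ≤
      ((g m)^3 * (g k)^3 + (g m)^3 * (Real.sqrt (kap N m k))^3 + (g k)^3 * (Real.sqrt (kap N k m))^3)/3 := by
    intro m k
    have e := Real.sq_sqrt (kap_nonneg N m k)
    rw [kap_comm N k m]
    have := young (g m * g k) (g m * Real.sqrt (kap N m k)) (g k * Real.sqrt (kap N m k))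
      (mul_nonneg (hg m) (hg k)) (mul_nonneg (hg m) (Real.sqrt_nonneg _)) (mul_nonneg (hg k) (Real.sqrt_nonneg _))
    calc (g m)^2 * (g k)^2 * kap N m k = (g m * g k) * (g m * Real.sqrt (kap N m k)) * (g k * Real.sqrt (kap N m k)) := by
          conv_lhs => rw [← e]
          ring
      _ ≤ _ := this
      _ = _ := by ring
  have h3 : 0 ≤ ∑ m ∈ B, (g m)^3 := Finset.sum_nonneg fun m _ => pow_nonneg (hg m) 3
  have hmix : ∑ m ∈ B, (g m)^3 * ∑ k ∈ B, (Real.sqrt (kap N m k))^3 ≤ (A * N) * (K * N) := by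
    calc _ ≤ ∑ m ∈ B, (g m)^3 * (K * N) := Finset.sum_le_sum fun m _ => mul_le_mul_of_nonneg_left (h N m) (pow_nonneg (hg m) 3)
      _ = (∑ m ∈ B, (g m)^3) * (K * N) := by rw [Finset.sum_mul]
      _ ≤ _ := mul_le_mul_of_nonneg_right hgA (by positivity)
  calc _ ≤ ∑ m ∈ B, ∑ k ∈ B, ((g m)^3 * (g k)^3 + (g m)^3 * (Real.sqrt (kap N m k))^3 + (g k)^3 * (Real.sqrt (kap N k m))^3)/3 :=
        Finset.sum_le_sum fun m _ => Finset.sum_le_sum fun k _ => pt m k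
    _ = ((∑ m ∈ B, (g m)^3) * (∑ k ∈ B, (g k)^3) + ∑ m ∈ B, (g m)^3 * ∑ k ∈ B, (Real.sqrt (kap N m k))^3
         + ∑ m ∈ B, (g m)^3 * ∑ k ∈ B, (Real.sqrt (kap N m k))^3)/3 := by
        simp_rw [← Finset.sum_div, Finset.sum_add_distrib, Finset.sum_mul_sum]
        congr 1
        congr 1
        · congr 1
          simp_rw [Finset.mul_sum]
        · rw [Finset.sum_comm]; simp_rw [Finset.mul_sum]
    _ ≤ ((A * N) * (A * N) + (A * N) * (K * N) + (A * N) * (K * N))/3 := by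
        have := mul_le_mul hgA hgA h3 (by positivity)
        linarith
    _ ≤ _ := by
        have h1 : 0 ≤ A * A * (N:ℝ)^2 := by positivity
        have h2 : 0 ≤ K * A * (N:ℝ)^2 := by positivity
        nlinarith

/-- exponential attached to a square -/
def eS (y : ℝ) (m : ℤ) (t : ℝ) : ℂ := Complex.exp (Real.pi * Complex.I * (m:ℂ)^2 * (t + y * Complex.I))

lemma eS_norm (y : ℝ) (m : ℤ) (t : ℝ) : ‖eS y m t‖ = Real.exp (-Real.pi * m^2 * y) := by
  unfold eS
  rw [Complex.norm_exp]
  congr 1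
  have : (Real.pi * Complex.I * (m:ℂ)^2 * (t + y * Complex.I)) =
     ((-Real.pi * m^2 * y : ℝ):ℂ) + ((Real.pi * m^2 * t : ℝ):ℂ) * Complex.I := by
    push_cast; linear_combination (Real.pi * (m:ℂ)^2 * y) * Complex.I_sq
  rw [this, Complex.add_re, Complex.ofReal_re, Complex.re_ofReal_mul, Complex.I_re, mul_zero, add_zero]

lemma eS_summable (y : ℝ) (hy : 0 < y) (t : ℝ) : Summable (fun m => eS y m t) := by
  have h := (hasSum_jacobiTheta₂_term 0 (τ := t + y * Complex.I) (by simp [hy])).summable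
  refine h.congr fun m => ?_
  unfold eS jacobiTheta₂_term
  congr 1; ring

lemma theta_cut (y : ℝ) (hy : 0 < y) (B : Finset ℤ) : ∃ S : Finset ℤ, B ⊆ S ∧
    ∀ t : ℝ, ‖jacobiTheta (t + y * Complex.I) - ∑ m ∈ S, eS y m t‖ ≤ 1 := by
  set f : ℤ → ℝ := fun m => Real.exp (-Real.pi * m^2 * y) with hf
  have hs : Summable f := by
    have := (eS_summable y hy 0).norm
    simpa only [eS_norm] using this
  have h1 : ∀ᶠ S in Filter.atTop, (∑' m, f m) - 1 < ∑ m ∈ S, f m :=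
    hs.hasSum.eventually (lt_mem_nhds (by linarith))
  obtain ⟨S, hS1, hS2⟩ := (h1.and (Filter.eventually_ge_atTop B)).exists
  refine ⟨S, hS2, fun t => ?_⟩
  have h2 := (eS_summable y hy t).sum_add_tsum_subtype_compl S
  have h3 : jacobiTheta (t + y * Complex.I) = ∑' m, eS y m t := rfl
  rw [h3, ← h2, add_sub_cancel_left]
  have h4 : Summable (fun m : {m // m ∉ S} => ‖eS y m t‖) :=
    ((eS_summable y hy t).norm).subtype _
  refine (norm_tsum_le_tsum_norm h4).trans ?_
  simp only [eS_norm]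
  have h5 := hs.sum_add_tsum_subtype_compl S
  simp only [hf] at h5 hS1
  linarith

/-- weight -/
def wf (y : ℝ) (c : ℕ) (t : ℝ) : ℝ := (‖((c*t:ℝ):UnitAddCircle)‖ + c*y)^(-(3/2:ℝ))

lemma wf_nonneg (y : ℝ) (hy : 0 < y) (c : ℕ) (t : ℝ) : 0 ≤ wf y c t := by
  unfold wf; positivity

lemma theta_P : ∃ C : ℝ, 1 ≤ C ∧ ∀ (lam : ℕ), 1 ≤ lam → ∀ (t : ℝ) (z : ℂ),
    ‖jacobiTheta (t + ((1/lam : ℝ):ℂ) * Complex.I) - z‖ ≤ 1 →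
    ‖z‖ ≤ C * Real.sqrt lam ∧
    ‖z‖^3 ≤ C * (Real.sqrt lam * Real.sqrt (Real.sqrt lam) + ∑ c ∈ Finset.Icc 1 (Nat.sqrt lam), wf (1/lam) c t) := by
  obtain ⟨C, hC, h⟩ := theta_main
  refine ⟨(2*C+2)^3, by nlinarith [pow_pos hC 2, pow_pos hC 3], fun lam hlam t z hz => ?_⟩
  have hl : (1:ℝ) ≤ lam := by exact_mod_cast hlam
  set y : ℝ := 1/lam with hy
  have hy0 : 0 < y := by positivity
  set R := Real.sqrt lam with hR
  have hR1 : 1 ≤ R := Real.one_le_sqrt.mpr hl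
  have hRsq : R^2 = lam := Real.sq_sqrt (by positivity)
  have hyR : y = (R^2)⁻¹ := by rw [hRsq, hy, one_div]
  obtain ⟨c, d, hcd, hb⟩ := h ⟨t + (y:ℂ) * Complex.I, by simp [hy0]⟩
  simp only at hb
  set D := ‖(c:ℂ) * (t + (y:ℂ) * Complex.I) + d‖ with hD
  have hre : |c * t + d| ≤ D := by
    have := Complex.abs_re_le_norm ((c:ℂ) * (t + (y:ℂ) * Complex.I) + d)
    simpa using this
  have him : |(c:ℝ)| * y ≤ D := by
    have := Complex.abs_im_le_norm ((c:ℂ) * (t + (y:ℂ) * Complex.I) + d)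
    simp [abs_mul, abs_of_pos hy0] at this
    simpa using this
  have hz' : ‖z‖ ≤ C * D^(-(1/2:ℝ)) + 1 := by
    have : ‖z‖ ≤ ‖jacobiTheta (t + (y:ℂ) * Complex.I)‖ + ‖jacobiTheta (t + (y:ℂ) * Complex.I) - z‖ := by
      have := norm_sub_norm_le z (jacobiTheta (t + (y:ℂ) * Complex.I))
      rw [norm_sub_rev] at this; linarith
    linarith
  have hDy : y ≤ D := by
    by_cases hc : c = 0
    · subst hc
      have hd : IsUnit d := isCoprime_zero_left.mp hcd
      have : |(d:ℝ)| = 1 := by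
        rcases Int.isUnit_iff.mp hd with h | h <;> simp [h]
      simp [this] at hre
      have : y ≤ 1 := by rw [hy, div_le_one (by linarith)]; exact hl
      linarith
    · have : (1:ℝ) ≤ |(c:ℝ)| := by
        rw [← Int.cast_abs]; exact_mod_cast Int.one_le_abs hc
      nlinarith
  have hD0 : 0 < D := lt_of_lt_of_le hy0 hDy
  -- monotonicity helper
  have mono : ∀ x : ℝ, 0 < x → x ≤ D → D^(-(1/2:ℝ)) ≤ x^(-(1/2:ℝ)) := fun x hx hxD =>
    Real.rpow_le_rpow_of_nonpos hx hxD (by norm_num)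
  have invpow : ∀ r : ℝ, 0 < r → ((r^2)⁻¹)^(-(1/2:ℝ)) = r := by
    intro r hr
    rw [Real.inv_rpow (by positivity), ← Real.rpow_natCast, ← Real.rpow_mul hr.le, ← Real.rpow_neg hr.le]
    norm_num
  have hw0 : 0 ≤ ∑ c ∈ Finset.Icc 1 (Nat.sqrt lam), wf y c t := Finset.sum_nonneg fun c _ => wf_nonneg y hy0 c t
  have hQ : Real.sqrt R ^2 = R := Real.sq_sqrt (by linarith)
  have hQ1 : 1 ≤ Real.sqrt R := Real.one_le_sqrt.mpr hR1
  have hbig : (2*C+2) ≤ (2*C+2)^3 := by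
    have : 1 ≤ 2*C+2 := by linarith
    exact le_self_pow₀ this (by norm_num)
  constructor
  · have h1 := mono y hy0 hDy
    rw [hyR, invpow R (by linarith)] at h1
    have : ‖z‖ ≤ C * R + 1 := hz'.trans (by nlinarith)
    nlinarith
  · -- large denominators
    have case1 : 1 / R ≤ D → ‖z‖^3 ≤ (2*C+2)^3 * (R * Real.sqrt R + ∑ c ∈ Finset.Icc 1 (Nat.sqrt lam), wf y c t) := by
      intro hDR
      have h1 := mono (1/R) (by positivity) hDR
      have h2 : (1/R)^(-(1/2:ℝ)) = Real.sqrt R := by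
        rw [← hQ, one_div, invpow _ (by positivity), hQ]
      rw [h2] at h1
      have h3 : ‖z‖ ≤ (2*C+2) * Real.sqrt R := hz'.trans (by nlinarith)
      calc ‖z‖^3 ≤ ((2*C+2) * Real.sqrt R)^3 := pow_le_pow_left₀ (norm_nonneg _) h3 3
        _ = (2*C+2)^3 * (Real.sqrt R^2 * Real.sqrt R) := by ring
        _ = (2*C+2)^3 * (R * Real.sqrt R) := by rw [hQ]
        _ ≤ _ := mul_le_mul_of_nonneg_left (by linarith) (by positivity)
    by_cases hc : c = 0
    · apply case1
      subst hc
      have hd : IsUnit d := isCoprime_zero_left.mp hcd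
      have : |(d:ℝ)| = 1 := by
        rcases Int.isUnit_iff.mp hd with h | h <;> simp [h]
      simp [this] at hre
      have : 1 / R ≤ 1 := by rw [div_le_one (by linarith)]; exact hR1
      linarith
    · set a := c.natAbs with ha
      have haR : |(c:ℝ)| = a := by rw [ha, Nat.cast_natAbs, Int.cast_abs]
      have ha1 : 1 ≤ a := Int.natAbs_pos.mpr hc
      rw [haR] at him
      by_cases haN : a ≤ Nat.sqrt lam
      · have haR' : (a:ℝ) ≤ R := by
          rw [hR]; exact (Nat.cast_le.mpr haN).trans (Real.nat_sqrt_le_real_sqrt)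
        set m := ‖((a*t:ℝ):UnitAddCircle)‖ + a*y with hm
        have ha1' : (1:ℝ) ≤ a := by exact_mod_cast ha1
        have hm0 : 0 < m := by positivity
        have hcirc : ‖((a*t:ℝ):UnitAddCircle)‖ ≤ |c * t + d| := by
          rw [UnitAddCircle.norm_eq]
          rcases Int.natAbs_eq c with h | h
          · have hc' : (c:ℝ) = a := by rw [h]; simp [ha]
            rw [hc']
            have := round_le (a*t:ℝ) (-d)
            push_cast at this; rwa [sub_neg_eq_add] at this
          · have hc' : (c:ℝ) = -a := by rw [h]; simp [ha]
            rw [hc']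
            have := round_le (a*t:ℝ) d
            rw [show -(a:ℝ)*t+d = -(a*t-d) by ring, abs_neg]; exact this
        have hmD : m / 2 ≤ D := by linarith
        have hm4 : m ≤ 4 := by
          have h1 : ‖((a*t:ℝ):UnitAddCircle)‖ ≤ 1/2 := by
            rw [UnitAddCircle.norm_eq]; exact abs_sub_round _
          have h2 : a * y ≤ 1 := by
            rw [hyR]
            have : (a:ℝ) * (R^2)⁻¹ ≤ R * (R^2)⁻¹ := mul_le_mul_of_nonneg_right haR' (by positivity)
            have h3 : R * (R^2)⁻¹ = 1/R := by field_simp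
            have : 1 / R ≤ 1 := by rw [div_le_one (by linarith)]; exact hR1
            linarith
          linarith
        have h1 := mono (m/2) (by positivity) hmD
        have h2 : (m/2)^(-(1/2:ℝ)) ≤ 2 * m^(-(1/2:ℝ)) := by
          rw [Real.div_rpow hm0.le (by norm_num), div_eq_mul_inv, mul_comm, ← Real.rpow_neg (by norm_num)]
          apply mul_le_mul_of_nonneg_right _ (by positivity)
          calc (2:ℝ)^(-(-(1/2:ℝ))) ≤ (2:ℝ)^(1:ℝ) := Real.rpow_le_rpow_of_exponent_le (by norm_num) (by norm_num)
            _ = 2 := Real.rpow_one 2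
        have h3 : 1 ≤ 2 * m^(-(1/2:ℝ)) := by
          have : (4:ℝ)^(-(1/2:ℝ)) ≤ m^(-(1/2:ℝ)) := Real.rpow_le_rpow_of_nonpos hm0 hm4 (by norm_num)
          have h4 : (4:ℝ)^(-(1/2:ℝ)) = 1/2 := by
            rw [show (4:ℝ) = 2^(2:ℝ) by norm_num, ← Real.rpow_mul (by norm_num), show (2:ℝ) * -(1/2) = -1 by norm_num, Real.rpow_neg_one]; norm_num
          linarith
        have h5 : ‖z‖ ≤ (2*C+2) * m^(-(1/2:ℝ)) := hz'.trans (by nlinarith)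
        have h6 : (m^(-(1/2:ℝ)))^3 = wf y a t := by
          unfold wf
          rw [← Real.rpow_natCast, ← Real.rpow_mul hm0.le, ← hm]; congr 1; norm_num
        have h7 : wf y a t ≤ ∑ c ∈ Finset.Icc 1 (Nat.sqrt lam), wf y c t :=
          Finset.single_le_sum (f := fun c => wf y c t) (fun c _ => wf_nonneg y hy0 c t) (Finset.mem_Icc.mpr ⟨ha1, haN⟩)
        calc ‖z‖^3 ≤ ((2*C+2) * m^(-(1/2:ℝ)))^3 := pow_le_pow_left₀ (norm_nonneg _) h5 3
          _ = (2*C+2)^3 * wf y a t := by rw [mul_pow, h6]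
          _ ≤ _ := mul_le_mul_of_nonneg_left (by
            have : 0 ≤ R * Real.sqrt R := by positivity
            linarith) (by positivity)
      · apply case1
        push Not at haN
        have : R ≤ a := by
          have h8 : (Nat.sqrt lam : ℝ) + 1 ≤ a := by exact_mod_cast haN
          have := Real.real_sqrt_le_nat_sqrt_succ (a := lam)
          linarith
        have h9 : R * y ≤ a * y := mul_le_mul_of_nonneg_right this hy0.le
        have h10 : R * y = 1 / R := by rw [hyR]; field_simp
        linarith

lemma circ_cont (c : ℝ) : Continuous (fun t : ℝ => ‖((c*t:ℝ):UnitAddCircle)‖) :=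
  continuous_norm.comp ((AddCircle.continuous_mk' (1:ℝ)).comp (continuous_const.mul continuous_id))

lemma wf_cont (y : ℝ) (hy : 0 < y) (c : ℕ) (hc : 1 ≤ c) : Continuous (wf y c) := by
  have hc' : (0:ℝ) < c := by exact_mod_cast hc
  unfold wf
  refine Continuous.rpow_const ((circ_cont c).add continuous_const) fun t => Or.inl ?_
  have : 0 < ‖((c*t:ℝ):UnitAddCircle)‖ + c*y := by positivity
  exact this.ne'

lemma wf_int_zero (y : ℝ) (hy : 0 < y) (c : ℕ) (hc : 1 ≤ c) (D : ℤ) (hD : ¬ (c:ℤ) ∣ D) :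
    ∫ t in (0:ℝ)..2, wf y c t * Real.cos (Real.pi * D * t) = 0 := by
  have hc' : (c:ℝ) ≠ 0 := by have : (0:ℝ) < c := by exact_mod_cast hc
                             exact this.ne'
  have hcC : (c:ℂ) ≠ 0 := by exact_mod_cast hc'
  set F : ℝ → ℂ := fun t => (wf y c t : ℂ) * Complex.exp (Real.pi * D * t * Complex.I) with hF
  have hper : Function.Periodic F 2 := by
    intro t
    simp only [hF]
    congr 1
    · congr 1
      unfold wf
      have : ((c*(t+2):ℝ):UnitAddCircle) = ((c*t:ℝ):UnitAddCircle) := by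
        rw [mul_add]
        rw [AddCircle.coe_add]
        have h2 : ((c*2:ℝ):UnitAddCircle) = 0 := by
          rw [AddCircle.coe_eq_zero_iff]; exact ⟨c*2, by simp⟩
        rw [h2, add_zero]
      rw [this]
    · have : (Real.pi * D * ((t+2:ℝ):ℂ) * Complex.I) = Real.pi * D * t * Complex.I + D * (2 * Real.pi * Complex.I) := by
        push_cast; ring
      rw [this, Complex.exp_add, Complex.exp_int_mul_two_pi_mul_I, mul_one]
  have hsh : ∀ t, F (t + 1/c) = Complex.exp (Real.pi * D / c * Complex.I) * F t := by
    intro t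
    simp only [hF]
    have h1 : wf y c (t + 1/c) = wf y c t := by
      unfold wf
      have : ((c*(t+1/c):ℝ):UnitAddCircle) = ((c*t:ℝ):UnitAddCircle) := by
        rw [mul_add, mul_one_div_cancel hc', AddCircle.coe_add_period]
      rw [this]
    rw [h1, mul_left_comm, ← Complex.exp_add]
    congr 2
    push_cast; field_simp; ring
  have hJ : Complex.exp (Real.pi * D / c * Complex.I) * ∫ t in (0:ℝ)..2, F t = ∫ t in (0:ℝ)..2, F t := by
    rw [← intervalIntegral.integral_const_mul]
    simp_rw [← hsh]
    rw [intervalIntegral.integral_comp_add_right F]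
    have := hper.intervalIntegral_add_eq (0 + 1/c) 0
    rw [show (0:ℝ) + 1/c + 2 = 2 + 1/c by ring, zero_add 2] at this
    exact this
  have hJ0 : ∫ t in (0:ℝ)..2, F t = 0 := by
    by_contra hne
    have h1 : Complex.exp (Real.pi * D / c * Complex.I) = 1 := by
      have := mul_right_cancel₀ hne (hJ.trans (one_mul _).symm); exact this
    rw [Complex.exp_eq_one_iff] at h1
    obtain ⟨n, hn⟩ := h1
    apply hD
    have hpi : (Real.pi:ℂ) ≠ 0 := by exact_mod_cast Real.pi_ne_zero
    have h2 : (D:ℂ) = 2 * n * c := by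
      field_simp at hn
      have := hn
      linear_combination hn
    have h3 : D = 2 * n * c := by exact_mod_cast h2
    exact ⟨2*n, by rw [h3]; ring⟩
  have hre2 : ∀ t, wf y c t * Real.cos (Real.pi * D * t) = (F t).re := by
    intro t
    simp only [hF]
    rw [Complex.re_ofReal_mul]
    congr 1
    rw [show (Real.pi * D * t * Complex.I : ℂ) = ((Real.pi * D * t : ℝ):ℂ) * Complex.I by push_cast; ring,
      Complex.exp_ofReal_mul_I_re]
  simp_rw [hre2]
  have hInt : IntervalIntegrable F volume 0 2 := by
    apply Continuous.intervalIntegrable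
    exact (Complex.continuous_ofReal.comp (wf_cont y hy c hc)).mul (by fun_prop)
  have := Complex.reCLM.intervalIntegral_comp_comm hInt
  simp only [Complex.reCLM_apply] at this
  rw [this, hJ0, Complex.zero_re]

lemma shift_int (δ : ℝ) (hδ : 0 < δ) : ∫ u in (0:ℝ)..1, (u + δ)^(-(3/2:ℝ)) ≤ 2 * δ^(-(1/2:ℝ)) := by
  rw [intervalIntegral.integral_comp_add_right (fun x => x^(-(3/2:ℝ)))]
  rw [integral_rpow (Or.inr ⟨by norm_num, by
    rw [Set.uIcc_of_le (by linarith)]; simp; intro h; linarith⟩)]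
  have h1 : 0 ≤ (1+δ)^(-(1/2:ℝ)) := by positivity
  rw [show (-(3/2:ℝ)) + 1 = -(1/2) by norm_num, zero_add]
  linarith

lemma circ_int (δ : ℝ) (hδ : 0 < δ) :
    ∫ u in (0:ℝ)..1, (‖((u:ℝ):UnitAddCircle)‖ + δ)^(-(3/2:ℝ)) ≤ 4 * δ^(-(1/2:ℝ)) := by
  have c0 : Continuous (fun u : ℝ => (‖((u:ℝ):UnitAddCircle)‖ + δ)^(-(3/2:ℝ))) := by
    refine Continuous.rpow_const (Continuous.add (by simpa using circ_cont 1) continuous_const) fun t => Or.inl ?_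
    have : 0 < ‖((t:ℝ):UnitAddCircle)‖ + δ := by positivity
    exact this.ne'
  have i1 : IntervalIntegrable (fun u : ℝ => (u + δ)^(-(3/2:ℝ))) volume 0 1 := by
    apply ContinuousOn.intervalIntegrable
    refine ContinuousOn.rpow_const (by fun_prop) fun u hu => Or.inl ?_
    rw [Set.uIcc_of_le (by norm_num)] at hu
    have := hu.1
    linarith
  have i2 : IntervalIntegrable (fun u : ℝ => ((1 - u) + δ)^(-(3/2:ℝ))) volume 0 1 := by
    apply ContinuousOn.intervalIntegrable
    refine ContinuousOn.rpow_const (by fun_prop) fun u hu => Or.inl ?_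
    rw [Set.uIcc_of_le (by norm_num)] at hu
    have := hu.2
    linarith
  have h1 : ∫ u in (0:ℝ)..1, (‖((u:ℝ):UnitAddCircle)‖ + δ)^(-(3/2:ℝ)) ≤
      ∫ u in (0:ℝ)..1, ((u + δ)^(-(3/2:ℝ)) + ((1 - u) + δ)^(-(3/2:ℝ))) := by
    apply intervalIntegral.integral_mono_on (by norm_num) (c0.intervalIntegrable _ _) (i1.add i2)
    intro u hu
    have hu0 := hu.1
    have hu1 := hu.2
    have p1 : 0 ≤ (u + δ)^(-(3/2:ℝ)) := by positivity
    have p2 : 0 ≤ ((1 - u) + δ)^(-(3/2:ℝ)) := Real.rpow_nonneg (by linarith) _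
    rw [UnitAddCircle.norm_eq]
    by_cases hr : round u ≤ 0
    · have hr' : (round u : ℝ) ≤ 0 := by exact_mod_cast hr
      have : u + δ ≤ |u - round u| + δ := by
        have := le_abs_self (u - round u); linarith
      have := Real.rpow_le_rpow_of_nonpos (by linarith) this (show -(3/2:ℝ) ≤ 0 by norm_num)
      linarith
    · have hr' : (1:ℝ) ≤ (round u : ℝ) := by
        have : 1 ≤ round u := by omega
        exact_mod_cast this
      have : (1 - u) + δ ≤ |u - round u| + δ := by
        have := neg_abs_le (u - round u); linarith
      have := Real.rpow_le_rpow_of_nonpos (by linarith) this (show -(3/2:ℝ) ≤ 0 by norm_num)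
      linarith
  rw [intervalIntegral.integral_add i1 i2] at h1
  have h2 := shift_int δ hδ
  have h3 : ∫ u in (0:ℝ)..1, ((1 - u) + δ)^(-(3/2:ℝ)) = ∫ u in (0:ℝ)..1, (u + δ)^(-(3/2:ℝ)) := by
    rw [intervalIntegral.integral_comp_sub_left (fun x => (x + δ)^(-(3/2:ℝ)))]; norm_num
  linarith

lemma wf_int (y : ℝ) (hy : 0 < y) (c : ℕ) (hc : 1 ≤ c) :
    ∫ t in (0:ℝ)..2, wf y c t ≤ 8 * (c*y)^(-(1/2:ℝ)) := by
  have hc' : (0:ℝ) < c := by exact_mod_cast hc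
  set φ : ℝ → ℝ := fun u => (‖((u:ℝ):UnitAddCircle)‖ + c*y)^(-(3/2:ℝ)) with hφ
  have c0 : Continuous φ := by
    refine Continuous.rpow_const (Continuous.add (by simpa using circ_cont 1) continuous_const) fun t => Or.inl ?_
    have : 0 < ‖((t:ℝ):UnitAddCircle)‖ + c*y := by positivity
    exact this.ne'
  have hper : Function.Periodic φ 1 := by
    intro u; simp only [hφ]; rw [AddCircle.coe_add_period]
  have e1 : ∫ t in (0:ℝ)..2, wf y c t = ∫ t in (0:ℝ)..2, φ (c * t) := rfl
  rw [e1, intervalIntegral.integral_comp_mul_left φ hc'.ne', mul_zero]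
  have e2 := hper.intervalIntegral_add_zsmul_eq (2*c:ℤ) 0 (fun a b => c0.intervalIntegrable a b)
  rw [show (0:ℝ) + (2*c:ℤ) • (1:ℝ) = c * 2 by simp; ring, zero_add] at e2
  rw [e2, zsmul_eq_mul, smul_eq_mul]
  push_cast
  rw [← mul_assoc, show (c:ℝ)⁻¹ * (2 * c) = 2 by field_simp]
  have := circ_int (c*y) (by positivity)
  linarith

lemma wf_int_cos (y : ℝ) (hy : 0 < y) (c : ℕ) (hc : 1 ≤ c) (D : ℤ) :
    ∫ t in (0:ℝ)..2, wf y c t * Real.cos (Real.pi * D * t) ≤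
      if (c:ℤ) ∣ D then 8 * (c*y)^(-(1/2:ℝ)) else 0 := by
  split_ifs with h
  · refine le_trans ?_ (wf_int y hy c hc)
    apply intervalIntegral.integral_mono_on (by norm_num)
    · exact ((wf_cont y hy c hc).mul (by fun_prop)).intervalIntegrable _ _
    · exact (wf_cont y hy c hc).intervalIntegrable _ _
    · intro t _
      have := Real.cos_le_one (Real.pi * D * t)
      have := wf_nonneg y hy c t
      nlinarith
  · exact (wf_int_zero y hy c hc D h).le

lemma eS_cont (y : ℝ) (m : ℤ) : Continuous (eS y m) := by
  unfold eS; fun_prop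

lemma int_exp_tau (k : ℤ) (y : ℝ) :
    ∫ t in (0:ℝ)..2, Complex.exp (Real.pi * Complex.I * (k:ℂ) * (t + y * Complex.I)) =
      if k = 0 then 2 else 0 := by
  split_ifs with hk
  · subst hk; simp
  · have hc : (Real.pi * Complex.I * (k:ℂ)) ≠ 0 := by
      have : (k:ℂ) ≠ 0 := by exact_mod_cast hk
      simp [this, Real.pi_ne_zero]
    have h1 : ∀ t : ℝ, Complex.exp (Real.pi * Complex.I * (k:ℂ) * (t + y * Complex.I)) =
        Complex.exp (Real.pi * Complex.I * (k:ℂ) * t) *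
          Complex.exp (Real.pi * Complex.I * (k:ℂ) * (y * Complex.I)) := by
      intro t; rw [← Complex.exp_add]; congr 1; ring
    simp only [h1]
    rw [intervalIntegral.integral_mul_const, integral_exp_mul_complex hc]
    have h2 : Complex.exp (Real.pi * Complex.I * (k:ℂ) * ((2:ℝ):ℂ)) = 1 := by
      rw [Complex.exp_eq_one_iff]; exact ⟨k, by push_cast; ring⟩
    rw [h2]; simp

lemma fourier_le (n lam : ℕ) (hlam : 1 ≤ lam) (S : Finset ℤ) (F : Fin n → ℤ → ℝ)
    (hF : ∀ l m, 0 ≤ F l m) :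
    ∑ x ∈ (Fintype.piFinset (fun _ : Fin n => S)).filter (fun x => ∑ i, (x i)^2 = (lam:ℤ)),
      ∏ l, F l (x l) ≤ Real.exp Real.pi / 2 *
        ∫ t in (0:ℝ)..2, ∏ l, ‖∑ m ∈ S, (F l m : ℂ) * eS (1/lam) m t‖ := by
  have hl : (1:ℝ) ≤ lam := by exact_mod_cast hlam
  set y : ℝ := 1/lam with hy
  set Φ : ℝ → ℂ := fun t => Complex.exp (Real.pi * Complex.I * (-(lam:ℤ):ℤ) * (t + y * Complex.I)) *
    ∏ l, ∑ m ∈ S, (F l m : ℂ) * eS y m t with hΦ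
  have h1 : ∀ t, Φ t = ∑ x ∈ Fintype.piFinset (fun _ : Fin n => S), (∏ l, (F l (x l):ℂ)) *
      Complex.exp (Real.pi * Complex.I * ((∑ i, (x i)^2 - (lam:ℤ) : ℤ):ℂ) * (t + y * Complex.I)) := by
    intro t
    simp only [hΦ]
    rw [Finset.prod_univ_sum, Finset.mul_sum]
    refine Finset.sum_congr rfl fun x _ => ?_
    rw [Finset.prod_mul_distrib, mul_left_comm]
    congr 1
    unfold eS
    rw [← Complex.exp_sum, ← Complex.exp_add]
    congr 1
    push_cast
    rw [← Finset.sum_mul, ← Finset.mul_sum]; ring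
  have h2 : ∫ t in (0:ℝ)..2, Φ t = ((2 * ∑ x ∈ (Fintype.piFinset (fun _ : Fin n => S)).filter (fun x => ∑ i, (x i)^2 = (lam:ℤ)),
      ∏ l, F l (x l) : ℝ) : ℂ) := by
    simp only [h1]
    rw [intervalIntegral.integral_finsetSum]
    · rw [Finset.sum_filter, Finset.mul_sum]
      push_cast
      refine Finset.sum_congr rfl fun x _ => ?_
      rw [intervalIntegral.integral_const_mul]
      have := int_exp_tau (∑ i, (x i)^2 - (lam:ℤ)) y
      push_cast at this
      rw [this]
      by_cases h : ∑ i, (x i)^2 = (lam:ℤ)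
      · rw [if_pos (by rw [h]; ring), if_pos h]; push_cast; ring
      · rw [if_neg (by intro h'; exact h (by linarith)), if_neg h]; simp
    · intro x _
      apply Continuous.intervalIntegrable
      fun_prop
  have h3 : ‖∫ t in (0:ℝ)..2, Φ t‖ ≤ ∫ t in (0:ℝ)..2, Real.exp Real.pi * ∏ l, ‖∑ m ∈ S, (F l m : ℂ) * eS y m t‖ := by
    refine (intervalIntegral.norm_integral_le_integral_norm (by norm_num)).trans (le_of_eq ?_)
    refine intervalIntegral.integral_congr fun t _ => ?_
    simp only [hΦ]
    rw [norm_mul, norm_prod, Complex.norm_exp]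
    congr 2
    have : (Real.pi * Complex.I * ((-(lam:ℤ):ℤ):ℂ) * (t + y * Complex.I)) =
        ((Real.pi * (lam * y) : ℝ):ℂ) + ((-Real.pi * lam * t : ℝ):ℂ) * Complex.I := by
      push_cast; linear_combination (-Real.pi * (lam:ℂ) * y) * Complex.I_sq
    rw [this, Complex.add_re, Complex.ofReal_re, Complex.re_ofReal_mul, Complex.I_re, mul_zero, add_zero]
    rw [hy]; field_simp
  rw [h2, Complex.norm_real, Real.norm_eq_abs, intervalIntegral.integral_const_mul] at h3
  have := (le_abs_self _).trans h3
  linarith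

lemma sq_norm_eq (y : ℝ) (B : Finset ℤ) (a : ℤ → ℝ) (t : ℝ) :
    ‖∑ m ∈ B, (a m : ℂ) * eS y m t‖^2 = ∑ m ∈ B, ∑ k ∈ B, (a m * Real.exp (-Real.pi * m^2 * y)) *
      (a k * Real.exp (-Real.pi * k^2 * y)) * Real.cos (Real.pi * ((m^2 - k^2 : ℤ):ℝ) * t) := by
  set b : ℤ → ℝ := fun m => a m * Real.exp (-Real.pi * m^2 * y) with hb
  have h1 : ∀ m : ℤ, (a m : ℂ) * eS y m t = ((b m * Real.cos (Real.pi * m^2 * t) : ℝ):ℂ) +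
      ((b m * Real.sin (Real.pi * m^2 * t) : ℝ):ℂ) * Complex.I := by
    intro m
    simp only [hb]
    unfold eS
    have : (Real.pi * Complex.I * (m:ℂ)^2 * (t + y * Complex.I)) =
      ((-Real.pi * m^2 * y : ℝ):ℂ) + ((Real.pi * m^2 * t : ℝ):ℂ) * Complex.I := by
      push_cast; linear_combination (Real.pi * (m:ℂ)^2 * y) * Complex.I_sq
    rw [this, Complex.exp_add, Complex.exp_mul_I, ← Complex.ofReal_exp, ← Complex.ofReal_cos, ← Complex.ofReal_sin]
    push_cast; ring
  simp only [h1]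
  rw [Finset.sum_add_distrib, ← Finset.sum_mul, ← Complex.ofReal_sum, ← Complex.ofReal_sum,
    ← Complex.normSq_eq_norm_sq, Complex.normSq_add_mul_I, sq, sq, Finset.sum_mul_sum, Finset.sum_mul_sum,
    ← Finset.sum_add_distrib]
  refine Finset.sum_congr rfl fun m _ => ?_
  rw [← Finset.sum_add_distrib]
  refine Finset.sum_congr rfl fun k _ => ?_
  have : Real.pi * ((m^2 - k^2 : ℤ):ℝ) * t = Real.pi * m^2 * t - Real.pi * k^2 * t := by push_cast; ring
  rw [this, Real.cos_sub]; ring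

lemma int_cos_le (D : ℤ) : ∫ t in (0:ℝ)..2, Real.cos (Real.pi * D * t) = if D = 0 then 2 else 0 := by
  have h := int_exp_tau D 0
  have h1 : ∀ t : ℝ, Real.cos (Real.pi * D * t) =
      (Complex.exp (Real.pi * Complex.I * (D:ℂ) * (t + (0:ℝ) * Complex.I))).re := by
    intro t
    have : (Real.pi * Complex.I * (D:ℂ) * (t + (0:ℝ) * Complex.I)) = ((Real.pi * D * t : ℝ):ℂ) * Complex.I := by
      push_cast; ring
    rw [this, Complex.exp_ofReal_mul_I_re]
  simp only [h1]
  have h2 := Complex.reCLM.intervalIntegral_comp_comm (μ := volume) (a := 0) (b := 2)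
    (f := fun t : ℝ => Complex.exp (Real.pi * Complex.I * (D:ℂ) * (t + (0:ℝ) * Complex.I)))
    (Continuous.intervalIntegrable (by fun_prop) _ _)
  simp only [Complex.reCLM_apply] at h2
  rw [h2, h]
  split_ifs <;> simp

lemma sqrt_bounds (lam : ℕ) (hlam : 1 ≤ lam) : 1 ≤ Nat.sqrt lam ∧ (Nat.sqrt lam : ℝ) ≤ Real.sqrt lam ∧
    Real.sqrt lam ≤ 2 * Nat.sqrt lam := by
  have h1 : 1 ≤ Nat.sqrt lam := Nat.le_sqrt.mpr (by simpa using hlam)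
  refine ⟨h1, Real.nat_sqrt_le_real_sqrt, ?_⟩
  have := Real.real_sqrt_le_nat_sqrt_succ (a := lam)
  have h2 : (1:ℝ) ≤ Nat.sqrt lam := by exact_mod_cast h1
  linarith

/-- the majorant of the cube of the theta sum -/
def maj (lam : ℕ) (t : ℝ) : ℝ :=
  Real.sqrt lam * Real.sqrt (Real.sqrt lam) + ∑ c ∈ Finset.Icc 1 (Nat.sqrt lam), wf (1/lam) c t

lemma maj_cont (lam : ℕ) (hlam : 1 ≤ lam) : Continuous (maj lam) := by
  have hl : (1:ℝ) ≤ lam := by exact_mod_cast hlam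
  unfold maj
  refine continuous_const.add (continuous_finsetSum _ fun c hc => wf_cont _ (by positivity) c (Finset.mem_Icc.mp hc).1)

lemma maj_nonneg (lam : ℕ) (hlam : 1 ≤ lam) (t : ℝ) : 0 ≤ maj lam t := by
  have hl : (1:ℝ) ≤ lam := by exact_mod_cast hlam
  unfold maj
  exact add_nonneg (by positivity) (Finset.sum_nonneg fun c _ => wf_nonneg _ (by positivity) c t)

lemma kap_diag (N : ℕ) (hN : 1 ≤ N) (m k : ℤ) (h : m^2 - k^2 = 0) : Real.sqrt N ≤ kap N m k := by
  have hN' : (1:ℝ) ≤ N := by exact_mod_cast hN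
  unfold kap
  simp only [h, dvd_zero, if_true]
  have h1 : ∑ c ∈ Finset.Icc 1 N, (N:ℝ)^(-(1/2:ℝ)) ≤ ∑ c ∈ Finset.Icc 1 N, (c:ℝ)^(-(1/2:ℝ)) := by
    refine Finset.sum_le_sum fun c hc => ?_
    obtain ⟨h1, h2⟩ := Finset.mem_Icc.mp hc
    exact Real.rpow_le_rpow_of_nonpos (by exact_mod_cast h1) (by exact_mod_cast h2) (by norm_num)
  refine le_trans (le_of_eq ?_) h1
  rw [Finset.sum_const, Nat.card_Icc, nsmul_eq_mul, Nat.add_sub_cancel, Real.sqrt_eq_rpow]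
  nth_rewrite 2 [← Real.rpow_one (N:ℝ)]
  rw [← Real.rpow_add (by positivity)]; norm_num

lemma maj_int_cos (lam : ℕ) (hlam : 1 ≤ lam) (m k : ℤ) :
    ∫ t in (0:ℝ)..2, maj lam t * Real.cos (Real.pi * ((m^2 - k^2 : ℤ):ℝ) * t) ≤
      12 * Real.sqrt lam * kap (Nat.sqrt lam) m k := by
  obtain ⟨hN, hNR, hRN⟩ := sqrt_bounds lam hlam
  have hl : (1:ℝ) ≤ lam := by exact_mod_cast hlam
  have hy : (0:ℝ) < 1/lam := by positivity
  set N := Nat.sqrt lam with hNdef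
  set R := Real.sqrt lam with hR
  have hR1 : 1 ≤ R := Real.one_le_sqrt.mpr hl
  set D : ℤ := m^2 - k^2 with hD
  unfold maj
  simp only [add_mul, Finset.sum_mul]
  rw [intervalIntegral.integral_add, intervalIntegral.integral_const_mul, int_cos_le,
    intervalIntegral.integral_finsetSum]
  · have h1 : ∑ c ∈ Finset.Icc 1 N, ∫ t in (0:ℝ)..2, wf (1/lam) c t * Real.cos (Real.pi * D * t) ≤ 8 * R * kap N m k := by
      unfold kap
      rw [Finset.mul_sum]
      refine Finset.sum_le_sum fun c hc => ?_
      refine (wf_int_cos (1/lam) hy c (Finset.mem_Icc.mp hc).1 D).trans ?_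
      by_cases h : (c:ℤ) ∣ D
      · rw [if_pos h, if_pos (by rw [← hD]; exact h), Real.mul_rpow (by positivity) hy.le]
        have : (1/lam:ℝ)^(-(1/2:ℝ)) = R := by
          rw [one_div, Real.inv_rpow (by positivity), ← Real.rpow_neg (by positivity), hR, Real.sqrt_eq_rpow]; norm_num
        rw [this]; linarith
      · rw [if_neg h, if_neg (by rw [← hD]; exact h)]; simp
    have h2 : R * Real.sqrt R * (if D = 0 then 2 else 0) ≤ 4 * R * kap N m k := by
      split_ifs with h
      · have h3 := kap_diag N hN m k h
        have h4 : Real.sqrt R ≤ 2 * Real.sqrt N := by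
          rw [show (2:ℝ) * Real.sqrt N = Real.sqrt (4 * N) by
            rw [Real.sqrt_mul (by norm_num), show (4:ℝ) = 2^2 by norm_num, Real.sqrt_sq (by norm_num)]]
          apply Real.sqrt_le_sqrt
          have : (0:ℝ) ≤ N := by positivity
          linarith
        have : Real.sqrt R ≤ 2 * kap N m k := by linarith
        nlinarith
      · have := kap_nonneg N m k
        rw [mul_zero]; positivity
    linarith
  · intro c hc
    exact (((wf_cont _ hy c (Finset.mem_Icc.mp hc).1).mul (by fun_prop)).intervalIntegrable _ _)
  · exact Continuous.intervalIntegrable (by fun_prop) _ _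
  · refine Continuous.intervalIntegrable (continuous_finsetSum _ fun c hc => ?_) _ _
    exact (wf_cont _ hy c (Finset.mem_Icc.mp hc).1).mul (by fun_prop)

lemma l2_maj : ∃ C : ℝ, 0 < C ∧ ∀ lam : ℕ, 1 ≤ lam → ∀ g : ℤ → ℝ, (∀ m, 0 ≤ g m) →
    ∑ m ∈ Finset.Icc (-(Nat.sqrt lam:ℤ)) (Nat.sqrt lam), (g m)^3 ≤ Nat.sqrt lam →
    ∫ t in (0:ℝ)..2, ‖∑ m ∈ Finset.Icc (-(Nat.sqrt lam:ℤ)) (Nat.sqrt lam), (((g m)^2 : ℝ) : ℂ) * eS (1/lam) m t‖^2 * maj lam t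
      ≤ C * (Real.sqrt lam)^3 := by
  obtain ⟨K, hK, hb⟩ := kap_bilinear
  refine ⟨12 * (1 + K), by positivity, fun lam hlam g hg hs => ?_⟩
  obtain ⟨hN, hNR, hRN⟩ := sqrt_bounds lam hlam
  have hl : (1:ℝ) ≤ lam := by exact_mod_cast hlam
  set N := Nat.sqrt lam with hNdef
  set R := Real.sqrt lam with hR
  have hR1 : 1 ≤ R := Real.one_le_sqrt.mpr hl
  have hb' := hb N g hg 1 zero_le_one (by simpa using hs)
  simp only [sq_norm_eq]
  simp only [Finset.sum_mul]
  set B := Finset.Icc (-(N:ℤ)) N with hB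
  have hcont : ∀ m k : ℤ, IntervalIntegrable (fun t : ℝ => (g m ^2 * Real.exp (-Real.pi * m^2 * (1/lam))) *
      (g k ^ 2 * Real.exp (-Real.pi * k^2 * (1/lam))) * Real.cos (Real.pi * ((m^2 - k^2 : ℤ):ℝ) * t) * maj lam t) volume 0 2 := by
    intro m k
    exact (Continuous.mul (by fun_prop) (maj_cont lam hlam)).intervalIntegrable _ _
  rw [intervalIntegral.integral_finsetSum]
  swap
  · intro m _
    have := IntervalIntegrable.sum B (fun k _ => hcont m k)
    simpa only [Finset.sum_fn] using this
  have h1 : ∀ m ∈ B, ∫ t in (0:ℝ)..2, ∑ k ∈ B, (g m ^2 * Real.exp (-Real.pi * m^2 * (1/lam))) *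
      (g k ^ 2 * Real.exp (-Real.pi * k^2 * (1/lam))) * Real.cos (Real.pi * ((m^2 - k^2 : ℤ):ℝ) * t) * maj lam t
      ≤ ∑ k ∈ B, 12 * R * (g m ^ 2 * g k ^ 2 * kap N m k) := by
    intro m _
    rw [intervalIntegral.integral_finsetSum (fun k _ => hcont m k)]
    refine Finset.sum_le_sum fun k _ => ?_
    simp only [mul_assoc _ (Real.cos _) (maj _ _)]
    rw [intervalIntegral.integral_const_mul]
    simp only [mul_comm (Real.cos _) (maj _ _)]
    have h2 := maj_int_cos lam hlam m k
    have hk := kap_nonneg N m k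
    have he : ∀ m : ℤ, Real.exp (-Real.pi * m^2 * (1/lam)) ≤ 1 := by
      intro m
      rw [Real.exp_le_one_iff]
      have : 0 ≤ Real.pi * m^2 * (1/lam) := by positivity
      linarith
    have e1 : g m ^2 * Real.exp (-Real.pi * m^2 * (1/lam)) ≤ g m ^ 2 := mul_le_of_le_one_right (by positivity) (he m)
    have e2 : g k ^2 * Real.exp (-Real.pi * k^2 * (1/lam)) ≤ g k ^ 2 := mul_le_of_le_one_right (by positivity) (he k)
    calc _ ≤ (g m ^2 * Real.exp (-Real.pi * m^2 * (1/lam))) *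
      (g k ^ 2 * Real.exp (-Real.pi * k^2 * (1/lam))) * (12 * R * kap N m k) := by
          exact mul_le_mul_of_nonneg_left h2 (by positivity)
      _ ≤ (g m ^2 * g k ^ 2) * (12 * R * kap N m k) := by gcongr
      _ = _ := by ring
  refine (Finset.sum_le_sum h1).trans ?_
  simp only [← Finset.mul_sum]
  have h3 : (N:ℝ)^2 ≤ R^2 := by gcongr
  calc _ ≤ 12 * R * ((1^2 + K * 1) * N^2) := by gcongr
    _ ≤ 12 * R * ((1^2 + K * 1) * R^2) := by gcongr
    _ = _ := by ring

lemma sphere_mem_box (n lam : ℕ) (x : Fin n → ℤ) (hx : ∑ i, (x i)^2 = (lam:ℤ)) (i : Fin n) :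
    x i ∈ Finset.Icc (-(Nat.sqrt lam:ℤ)) (Nat.sqrt lam) := by
  have h1 : (x i)^2 ≤ (lam:ℤ) := by
    rw [← hx]; exact Finset.single_le_sum (f := fun i => (x i)^2) (fun j _ => sq_nonneg _) (Finset.mem_univ i)
  have h2 : (x i).natAbs ≤ Nat.sqrt lam := by
    rw [Nat.le_sqrt]
    have : ((x i).natAbs : ℤ) * (x i).natAbs ≤ lam := by
      rw [← sq, Int.natAbs_sq]; exact h1
    exact_mod_cast this
  rw [Finset.mem_Icc]; omega

lemma pair_bound (n : ℕ) (hn : 5 ≤ n) : ∃ C : ℝ, 0 < C ∧ ∀ lam : ℕ, 1 ≤ lam → ∀ i j : Fin n, i ≠ j →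
    ∀ g h : ℤ → ℝ, (∀ m, 0 ≤ g m) → (∀ m, 0 ≤ h m) →
    ∑ m ∈ Finset.Icc (-(Nat.sqrt lam:ℤ)) (Nat.sqrt lam), (g m)^3 ≤ Nat.sqrt lam →
    ∑ m ∈ Finset.Icc (-(Nat.sqrt lam:ℤ)) (Nat.sqrt lam), (h m)^3 ≤ Nat.sqrt lam →
    ∑ x ∈ (sphere_finite n lam).toFinset, (g (x i))^2 * (h (x j))^2 ≤ C * (Real.sqrt lam)^(n-2) := by
  obtain ⟨C1, hC1, hP⟩ := theta_P
  obtain ⟨C2, hC2, hL⟩ := l2_maj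
  refine ⟨Real.exp Real.pi / 2 * (C1^(n-5) * C1 * C2), by positivity, fun lam hlam i j hij g h hg hh hgs hhs => ?_⟩
  have hl : (1:ℝ) ≤ lam := by exact_mod_cast hlam
  have hy : (0:ℝ) < 1/lam := by positivity
  have Lg := hL lam hlam g hg hgs
  have Lh := hL lam hlam h hh hhs
  set B := Finset.Icc (-(Nat.sqrt lam:ℤ)) (Nat.sqrt lam) with hB
  set R := Real.sqrt lam with hR
  have hR1 : 1 ≤ R := Real.one_le_sqrt.mpr hl
  obtain ⟨S, hBS, hS⟩ := theta_cut (1/lam) hy B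
  set F : Fin n → ℤ → ℝ := fun l m => if l = i then (if m ∈ B then g m ^ 2 else 0)
    else if l = j then (if m ∈ B then h m ^ 2 else 0) else 1 with hFdef
  have hF0 : ∀ l m, 0 ≤ F l m := by
    intro l m; simp only [hFdef]; split_ifs <;> positivity
  have split : ∀ G : Fin n → ℝ, (∀ l, l ≠ i → l ≠ j → G l = G l) → ∏ l, G l = G i * (G j * ∏ l ∈ (Finset.univ.erase i).erase j, G l) := by
    intro G _
    rw [Finset.mul_prod_erase _ _ (by simp [Ne.symm hij]), Finset.mul_prod_erase _ _ (by simp)]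
  have hcard : ((Finset.univ.erase i).erase j : Finset (Fin n)).card = n - 2 := by
    rw [Finset.card_erase_of_mem (by simp [Ne.symm hij]), Finset.card_erase_of_mem (by simp)]
    simp; omega
  have hmain := fourier_le n lam hlam S F hF0
  have hleft : ∑ x ∈ (sphere_finite n lam).toFinset, (g (x i))^2 * (h (x j))^2 ≤
      ∑ x ∈ (Fintype.piFinset (fun _ : Fin n => S)).filter (fun x => ∑ i, (x i)^2 = (lam:ℤ)), ∏ l, F l (x l) := by
    have hsub : (sphere_finite n lam).toFinset ⊆ (Fintype.piFinset (fun _ : Fin n => S)).filter (fun x => ∑ i, (x i)^2 = (lam:ℤ)) := by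
      intro x hx
      simp only [Set.Finite.mem_toFinset, Set.mem_ofPred_eq] at hx
      simp only [Finset.mem_filter, Fintype.mem_piFinset]
      exact ⟨fun l => hBS (sphere_mem_box n lam x hx l), hx⟩
    refine le_trans (le_of_eq ?_) (Finset.sum_le_sum_of_subset_of_nonneg hsub fun x _ _ => Finset.prod_nonneg fun l _ => hF0 l _)
    refine Finset.sum_congr rfl fun x hx => ?_
    simp only [Set.Finite.mem_toFinset, Set.mem_ofPred_eq] at hx
    rw [split _ (fun _ _ _ => rfl)]
    have e1 : F i (x i) = g (x i)^2 := by simp [hFdef, hB, sphere_mem_box n lam x hx i, -Finset.mem_Icc]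
    have e2 : F j (x j) = h (x j)^2 := by simp [hFdef, hB, Ne.symm hij, sphere_mem_box n lam x hx j, -Finset.mem_Icc]
    have e3 : ∏ l ∈ (Finset.univ.erase i).erase j, F l (x l) = 1 := by
      refine Finset.prod_eq_one fun l hl => ?_
      simp only [Finset.mem_erase, Finset.mem_univ, and_true] at hl
      simp [hFdef, hl.1, hl.2]
    rw [e1, e2, e3, mul_one]
  refine hleft.trans (hmain.trans ?_)
  rw [mul_assoc]
  refine mul_le_mul_of_nonneg_left ?_ (by positivity)
  set Gt : ℝ → ℝ := fun t => ‖∑ m ∈ B, (((g m)^2 : ℝ) : ℂ) * eS (1/lam) m t‖ with hGt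
  set Ht : ℝ → ℝ := fun t => ‖∑ m ∈ B, (((h m)^2 : ℝ) : ℂ) * eS (1/lam) m t‖ with hHt
  have cG : Continuous Gt := continuous_norm.comp (continuous_finsetSum _ fun m _ => continuous_const.mul (eS_cont _ m))
  have cH : Continuous Ht := continuous_norm.comp (continuous_finsetSum _ fun m _ => continuous_const.mul (eS_cont _ m))
  have cM := maj_cont lam hlam
  have hpt : ∀ t, ∏ l, ‖∑ m ∈ S, (F l m : ℂ) * eS (1/lam) m t‖ ≤
      (C1*R)^(n-5) * C1 / 2 * (Gt t^2 * maj lam t + Ht t^2 * maj lam t) := by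
    intro t
    rw [split (fun l => ‖∑ m ∈ S, (F l m : ℂ) * eS (1/lam) m t‖) (fun _ _ _ => rfl)]
    have e1 : ‖∑ m ∈ S, (F i m : ℂ) * eS (1/lam) m t‖ = Gt t := by
      simp only [hGt]
      congr 1
      rw [← Finset.sum_subset hBS]
      · refine Finset.sum_congr rfl fun m hm => ?_
        simp only [hFdef, if_true, if_pos hm]
      · intro m _ hm; simp only [hFdef, if_true, if_neg hm]; simp
    have e2 : ‖∑ m ∈ S, (F j m : ℂ) * eS (1/lam) m t‖ = Ht t := by
      simp only [hHt]
      congr 1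
      rw [← Finset.sum_subset hBS]
      · refine Finset.sum_congr rfl fun m hm => ?_
        simp only [hFdef, if_true, if_pos hm, if_neg (Ne.symm hij)]
      · intro m _ hm; simp only [hFdef, if_true, if_neg hm, if_neg (Ne.symm hij)]; simp
    have e3 : ∏ l ∈ (Finset.univ.erase i).erase j, ‖∑ m ∈ S, (F l m : ℂ) * eS (1/lam) m t‖ =
        ‖∑ m ∈ S, eS (1/lam) m t‖^(n-2) := by
      rw [← hcard, ← Finset.prod_const]
      refine Finset.prod_congr rfl fun l hl => ?_
      simp only [Finset.mem_erase, Finset.mem_univ, and_true] at hl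
      simp [hFdef, hl.1, hl.2]
    rw [e1, e2, e3]
    obtain ⟨p1, p2⟩ := hP lam hlam t _ (hS t)
    change _ ≤ C1 * maj lam t at p2
    set P := ‖∑ m ∈ S, eS (1/lam) m t‖ with hPd
    have hP0 : 0 ≤ P := norm_nonneg _
    have hPn : P^(n-2) ≤ (C1*R)^(n-5) * (C1 * maj lam t) := by
      rw [show n - 2 = (n-5) + 3 by omega, pow_add]
      gcongr
    have hGH : Gt t * Ht t ≤ (Gt t^2 + Ht t^2)/2 := by nlinarith [sq_nonneg (Gt t - Ht t)]
    calc Gt t * (Ht t * P^(n-2)) = (Gt t * Ht t) * P^(n-2) := by ring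
      _ ≤ ((Gt t^2 + Ht t^2)/2) * ((C1*R)^(n-5) * (C1 * maj lam t)) := by
        gcongr
      _ = _ := by ring
  have hI : ∫ t in (0:ℝ)..2, ∏ l, ‖∑ m ∈ S, (F l m : ℂ) * eS (1/lam) m t‖ ≤
      ∫ t in (0:ℝ)..2, (C1*R)^(n-5) * C1 / 2 * (Gt t^2 * maj lam t + Ht t^2 * maj lam t) := by
    refine intervalIntegral.integral_mono_on (by norm_num) ?_ ?_ fun t _ => hpt t
    · refine Continuous.intervalIntegrable (continuous_finsetProd _ fun l _ => ?_) _ _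
      exact continuous_norm.comp (continuous_finsetSum _ fun m _ => continuous_const.mul (eS_cont _ m))
    · exact Continuous.intervalIntegrable (by fun_prop) _ _
  refine hI.trans ?_
  rw [intervalIntegral.integral_const_mul, intervalIntegral.integral_add
    (Continuous.intervalIntegrable (by fun_prop) _ _) (Continuous.intervalIntegrable (by fun_prop) _ _)]
  have hpow : R^(n-2) = R^(n-5) * R^3 := by rw [← pow_add]; congr 1; omega
  calc _ ≤ (C1*R)^(n-5) * C1 / 2 * (C2 * R^3 + C2 * R^3) := by gcongr
    _ = _ := by rw [hpow, mul_pow]; ring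

lemma range_ne (L : ℕ) : (range (L+1)).Nonempty := Finset.nonempty_range_iff.mpr (Nat.succ_ne_zero L)

/-- truncated one-sided maximal function -/
def osMax (L : ℕ) (g : ℤ → ℝ) (y : ℤ) : ℝ :=
  (range (L+1)).sup' (range_ne L) (fun n => (∑ m ∈ range n, g (y + m)) / n)

lemma osMax_nonneg (L : ℕ) (g : ℤ → ℝ) (y : ℤ) : 0 ≤ osMax L g y := by
  unfold osMax
  refine le_trans (le_of_eq ?_) (Finset.le_sup' _ (show 0 ∈ range (L+1) by simp))
  simp

lemma osMax_supp (L K : ℕ) (g : ℤ → ℝ) (hK : ∀ y, y ∉ Finset.Icc (-(K:ℤ)) K → g y = 0) (y : ℤ)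
    (hy : y ∉ Finset.Icc (-(K:ℤ) - L) K) : osMax L g y = 0 := by
  refine le_antisymm ?_ (osMax_nonneg L g y)
  unfold osMax
  refine Finset.sup'_le _ _ fun n hn => ?_
  rw [Finset.sum_eq_zero, zero_div]
  intro m hm
  apply hK
  simp only [Finset.mem_Icc, Finset.mem_range] at *
  omega

/-- auxiliary function in the Garsia argument -/
def osF (L : ℕ) (g : ℤ → ℝ) (t : ℝ) (y : ℤ) : ℝ :=
  (range (L+1)).sup' (range_ne L) (fun n => (∑ m ∈ range n, g (y + m)) - n * t)

lemma osF_le (L : ℕ) (g : ℤ → ℝ) (t : ℝ) (y : ℤ) (n : ℕ) (hn : n ∈ range (L+1)) :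
    (∑ m ∈ range n, g (y + m)) - n * t ≤ osF L g t y :=
  Finset.le_sup' (fun n : ℕ => (∑ m ∈ range n, g (y + m)) - n * t) hn

lemma osF_nonneg (L : ℕ) (g : ℤ → ℝ) (t : ℝ) (y : ℤ) : 0 ≤ osF L g t y := by
  have := osF_le L g t y 0 (by simp)
  simpa using this

lemma hopf (L K : ℕ) (g : ℤ → ℝ) (hK : ∀ y, y ∉ Finset.Icc (-(K:ℤ)) K → g y = 0)
    (t : ℝ) (ht : 0 < t) :
    ∑ y ∈ (Finset.Icc (-(K:ℤ) - L) K).filter (fun y => t < osMax L g y), t ≤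
      ∑ y ∈ (Finset.Icc (-(K:ℤ) - L) K).filter (fun y => t < osMax L g y), g y := by
  obtain ⟨F, hF⟩ : ∃ F, F = osF L g t := ⟨_, rfl⟩
  set W := Finset.Icc (-(K:ℤ) - L) K with hW
  set E := W.filter (fun y => t < osMax L g y) with hE
  have hF0 : ∀ y, 0 ≤ F y := by rw [hF]; exact osF_nonneg L g t
  have hoff : ∀ y, ¬ t < osMax L g y → F y = 0 := by
    intro y hy
    refine le_antisymm ?_ (hF0 y)
    rw [hF]
    refine Finset.sup'_le _ _ fun n hn => ?_
    have h1 : (∑ m ∈ range n, g (y + m)) / n ≤ t :=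
      (Finset.le_sup' (fun n : ℕ => (∑ m ∈ range n, g (y + m)) / n) hn).trans (not_lt.mp hy)
    rcases Nat.eq_zero_or_pos n with h | h
    · subst h; simp
    · have : (0:ℝ) < n := by exact_mod_cast h
      rw [div_le_iff₀ this] at h1; linarith
  have hWoff : ∀ y, y ∉ E → F y = 0 := by
    intro y hy
    apply hoff
    intro h
    apply hy
    simp only [hE, Finset.mem_filter]
    refine ⟨?_, h⟩
    by_contra hc
    rw [osMax_supp L K g hK y hc] at h; linarith
  have hon : ∀ y ∈ E, F y ≤ g y - t + F (y+1) := by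
    intro y hy
    simp only [hE, Finset.mem_filter] at hy
    by_cases hFy : F y = 0
    · have h2 : t < osMax L g y := hy.2
      exfalso
      obtain ⟨n, hn, h3⟩ := (Finset.lt_sup'_iff (range_ne L)).mp h2
      have hn0 : n ≠ 0 := by rintro rfl; simp at h3; linarith
      have hnp : (0:ℝ) < n := by exact_mod_cast Nat.pos_of_ne_zero hn0
      rw [lt_div_iff₀ hnp] at h3
      have h4 := osF_le L g t y n hn
      rw [← hF] at h4
      linarith
    · obtain ⟨n, hn, h3⟩ := Finset.exists_mem_eq_sup' (s := range (L+1)) (range_ne L) (fun n : ℕ => (∑ m ∈ range n, g (y + m)) - n * t)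
      change osF L g t y = _ at h3
      rw [← hF] at h3
      cases n with
      | zero => simp at h3; exact absurd h3 hFy
      | succ n =>
        have h4 := osF_le L g t (y+1) n (by simp at hn ⊢; omega)
        rw [← hF] at h4
        rw [h3, Finset.sum_range_succ']
        have : ∑ k ∈ range n, g (y + ((k + 1 : ℕ):ℤ)) = ∑ k ∈ range n, g (y + 1 + k) := by
          refine Finset.sum_congr rfl fun k _ => ?_
          congr 1; push_cast; ring
        rw [this]
        push_cast
        simp only [add_zero]
        linarith [h4]
  have hs : Summable F := summable_of_ne_finset_zero (s := E) hWoff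
  have hs' : Summable (fun y => F (y+1)) := (Equiv.addRight (1:ℤ)).summable_iff.mpr hs
  have h1 : ∑' y, F (y+1) = ∑' y, F y := (Equiv.addRight (1:ℤ)).tsum_eq F
  have h2 : ∑' y, F y = ∑ y ∈ E, F y := tsum_eq_sum hWoff
  have h3 : ∑ y ∈ E, F (y+1) ≤ ∑' y, F (y+1) := hs'.sum_le_tsum E (fun y _ => hF0 _)
  have h4 := Finset.sum_le_sum hon
  rw [Finset.sum_add_distrib, Finset.sum_sub_distrib] at h4
  linarith

lemma osMax_lp (r : ℝ) (hr : 1 < r) (L K : ℕ) (g : ℤ → ℝ) (hg : ∀ y, 0 ≤ g y)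
    (hK : ∀ y, y ∉ Finset.Icc (-(K:ℤ)) K → g y = 0) :
    ∑' y, ENNReal.ofReal (osMax L g y) ^ r ≤ ENNReal.ofReal (r/(r-1)) ^ r * ∑' y, ENNReal.ofReal (g y) ^ r := by
  set M := osMax L g with hM
  have hM0 : ∀ y, 0 ≤ M y := osMax_nonneg L g
  set ν : Measure ℤ := Measure.count.withDensity (fun y => ENNReal.ofReal (g y)) with hν
  set W := Finset.Icc (-(K:ℤ) - L) K with hW
  have hset : ∀ t : ℝ, 0 < t → {y | t < M y} = ((W.filter (fun y => t < M y) : Finset ℤ) : Set ℤ) := by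
    intro t ht
    ext y
    simp only [Set.mem_ofPred_eq, Finset.coe_filter]
    refine ⟨fun h => ⟨?_, h⟩, fun h => h.2⟩
    by_contra hc
    have := osMax_supp L K g hK y hc
    rw [← hM] at this
    rw [this] at h; linarith
  have hweak : ∀ t : ℝ, 0 < t → ENNReal.ofReal t * Measure.count {y | t < M y} ≤ ν {y | t < M y} := by
    intro t ht
    rw [hset t ht, Measure.count_apply_finset, hν, withDensity_apply _ (Finset.measurableSet _),
      ]
    have h := hopf L K g hK t ht
    rw [Finset.sum_const, nsmul_eq_mul] at h
    rw [lintegral_finset]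
    simp only [Measure.count_singleton, mul_one]
    rw [← ENNReal.ofReal_sum_of_nonneg (fun y _ => hg y), ← ENNReal.ofReal_natCast, ← ENNReal.ofReal_mul ht.le]
    apply ENNReal.ofReal_le_ofReal
    rw [mul_comm]; exact h
  have h1 := lintegral_rpow_eq_lintegral_meas_lt_mul (μ := Measure.count) (f := M) (Filter.Eventually.of_forall hM0)
    (measurable_of_countable M).aemeasurable (p := r) (by linarith)
  have h2 := lintegral_rpow_eq_lintegral_meas_lt_mul (μ := ν) (f := M) (Filter.Eventually.of_forall hM0)
    (measurable_of_countable M).aemeasurable (p := r-1) (by linarith)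
  set X := ∑' y, ENNReal.ofReal (M y) ^ r with hX
  set A := ∑' y, ENNReal.ofReal (g y) ^ r with hA
  have h3 : ∫⁻ t in Set.Ioi (0:ℝ), Measure.count {y | t < M y} * ENNReal.ofReal (t ^ (r-1)) ≤
      ∫⁻ t in Set.Ioi (0:ℝ), ν {y | t < M y} * ENNReal.ofReal (t ^ (r-1-1)) := by
    refine setLIntegral_mono' measurableSet_Ioi fun t ht => ?_
    have ht' : 0 < t := ht
    calc _ = (ENNReal.ofReal t * Measure.count {y | t < M y}) * ENNReal.ofReal (t ^ (r-1-1)) := by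
          have : t^(r-1) = t * t^(r-1-1) := by
            rw [mul_comm, ← Real.rpow_add_one ht'.ne']; congr 1; ring
          rw [this, ENNReal.ofReal_mul ht'.le]; ring
      _ ≤ _ := by gcongr; exact hweak t ht'
  have h4 : X ≤ ENNReal.ofReal (r/(r-1)) * ∑' y, ENNReal.ofReal (g y) * ENNReal.ofReal (M y) ^ (r-1) := by
    have e1 : X = ∫⁻ y, ENNReal.ofReal (M y ^ r) ∂Measure.count := by
      rw [lintegral_count, hX]
      refine tsum_congr fun y => ENNReal.ofReal_rpow_of_nonneg (hM0 y) (by linarith)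
    have e2 : ∑' y, ENNReal.ofReal (g y) * ENNReal.ofReal (M y) ^ (r-1) = ∫⁻ y, ENNReal.ofReal (M y ^ (r-1)) ∂ν := by
      rw [hν, lintegral_withDensity_eq_lintegral_mul _ (measurable_of_countable _) (measurable_of_countable _), lintegral_count]
      refine tsum_congr fun y => ?_
      rw [Pi.mul_apply, ENNReal.ofReal_rpow_of_nonneg (hM0 y) (by linarith)]
    rw [e1, e2, h1, h2, ← mul_assoc, ← ENNReal.ofReal_mul (by apply div_nonneg <;> linarith),
      div_mul_cancel₀ _ (by linarith)]
    gcongr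
  have hconj : r.HolderConjugate (r/(r-1)) := Real.HolderConjugate.conjExponent hr
  have h5 : ∑' y, ENNReal.ofReal (g y) * ENNReal.ofReal (M y) ^ (r-1) ≤ A^(1/r) * X^(1/(r/(r-1))) := by
    have := ENNReal.lintegral_mul_le_Lp_mul_Lq (Measure.count : Measure ℤ) hconj
      (f := fun y => ENNReal.ofReal (g y)) (g := fun y => ENNReal.ofReal (M y) ^ (r-1))
      (measurable_of_countable _).aemeasurable (measurable_of_countable _).aemeasurable
    simp only [lintegral_count, Pi.mul_apply, ← ENNReal.rpow_mul] at this
    rw [mul_div_cancel₀ _ (by linarith)] at this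
    exact this
  have hXfin : X ≠ ∞ := by
    rw [hX, tsum_eq_sum (s := W)]
    · exact (ENNReal.sum_lt_top.mpr fun y _ => ENNReal.rpow_lt_top_of_nonneg (by linarith) ENNReal.ofReal_ne_top).ne
    · intro y hy
      have : M y = 0 := osMax_supp L K g hK y hy
      rw [this, ENNReal.ofReal_zero, ENNReal.zero_rpow_of_pos (by linarith)]
  by_cases hX0 : X = 0
  · rw [hX0]; exact zero_le
  have h6 : X ≤ (ENNReal.ofReal (r/(r-1)) * A^(1/r)) * X^(1/(r/(r-1))) := by
    rw [mul_assoc]; exact h4.trans (by gcongr)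
  have h7 : X^(1/r) ≤ ENNReal.ofReal (r/(r-1)) * A^(1/r) := by
    have e : X = X^(1/r) * X^(1/(r/(r-1))) := by
      rw [← ENNReal.rpow_add _ _ hX0 hXfin]
      have : 1/r + 1/(r/(r-1)) = 1 := by
        have : r ≠ 0 := by linarith
        have : r - 1 ≠ 0 := by linarith
        field_simp; ring
      rw [this, ENNReal.rpow_one]
    have h6' : X^(1/r) * X^(1/(r/(r-1))) ≤ (ENNReal.ofReal (r/(r-1)) * A^(1/r)) * X^(1/(r/(r-1))) := e ▸ h6
    refine (ENNReal.mul_le_mul_iff_left ?_ ?_).mp h6'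
    · exact (ENNReal.rpow_pos (pos_iff_ne_zero.mpr hX0) hXfin).ne'
    · exact ENNReal.rpow_ne_top_of_nonneg (by apply div_nonneg zero_le_one; apply div_nonneg <;> linarith) hXfin
  have h8 := ENNReal.rpow_le_rpow h7 (show 0 ≤ r by linarith)
  rw [ENNReal.mul_rpow_of_nonneg _ _ (by linarith), ← ENNReal.rpow_mul, ← ENNReal.rpow_mul,
    one_div_mul_cancel (by linarith), ENNReal.rpow_one, ENNReal.rpow_one] at h8
  exact h8

/-- one-sided maximal function -/
def osHL (g : ℤ → ℝ≥0∞) (y : ℤ) : ℝ≥0∞ :=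
  ⨆ n : ℕ, ((n+1 : ℕ) : ℝ≥0∞)⁻¹ * ∑ m ∈ range (n+1), g (y + m)

lemma osHL_lp (r : ℝ) (hr : 1 < r) (g : ℤ → ℝ≥0∞) :
    ∑' y, osHL g y ^ r ≤ ENNReal.ofReal (r/(r-1)) ^ r * ∑' y, g y ^ r := by
  have hr0 : 0 < r := by linarith
  have hc0 : ENNReal.ofReal (r/(r-1)) ^ r ≠ 0 := by
    have : 0 < ENNReal.ofReal (r/(r-1)) := ENNReal.ofReal_pos.mpr (div_pos hr0 (by linarith))
    exact (ENNReal.rpow_pos this ENNReal.ofReal_ne_top).ne'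
  by_cases hfin : ∑' y, g y ^ r = ∞
  · rw [hfin, ENNReal.mul_top hc0]; exact le_top
  have hgf : ∀ y, g y ≠ ∞ := by
    intro y hy
    have := ENNReal.ne_top_of_tsum_ne_top hfin y
    rw [hy, ENNReal.top_rpow_of_pos hr0] at this
    exact this rfl
  set a : ℕ → ℤ → ℝ≥0∞ := fun n y => ((n+1 : ℕ) : ℝ≥0∞)⁻¹ * ∑ m ∈ range (n+1), g (y + m) with ha
  set b : ℕ → ℤ → ℝ≥0∞ := fun L y => (range L).sup (fun n => a n y) with hb
  have hbm : ∀ y, Monotone (fun L => b L y ^ r) := by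
    intro y L L' h
    exact ENNReal.rpow_le_rpow (Finset.sup_mono (Finset.range_mono h)) hr0.le
  have hsup : ∀ y, osHL g y ^ r = ⨆ L, b L y ^ r := by
    intro y
    have h1 : osHL g y = ⨆ L, b L y := by
      refine le_antisymm (iSup_le fun n => ?_) (iSup_le fun L => Finset.sup_le fun n _ => le_iSup (fun n => a n y) n)
      refine le_iSup_of_le (n+1) ?_
      exact Finset.le_sup (f := fun n => a n y) (show n ∈ range (n+1) by simp)
    rw [h1]
    exact (ENNReal.orderIsoRpow r hr0).map_iSup (fun L => b L y)
  rw [ENNReal.tsum_eq_iSup_sum]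
  refine iSup_le fun W => ?_
  simp only [hsup]
  rw [ENNReal.finsetSum_iSup_of_monotone hbm]
  refine iSup_le fun L => ?_
  obtain ⟨K0, hK0⟩ : ∃ K0 : ℕ, ∀ y ∈ W, y ∈ Finset.Icc (-(K0:ℤ)) K0 := by
    refine ⟨W.sup Int.natAbs, fun y hy => ?_⟩
    have := Finset.le_sup (f := Int.natAbs) hy
    rw [Finset.mem_Icc]; omega
  set K := K0 + L with hK
  set h : ℤ → ℝ := fun y => if y ∈ Finset.Icc (-(K:ℤ)) K then (g y).toReal else 0 with hh
  have hh0 : ∀ y, 0 ≤ h y := by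
    intro y; simp only [hh]; split_ifs <;> positivity
  have hle : ∀ y, ENNReal.ofReal (h y) ≤ g y := by
    intro y; simp only [hh]; split_ifs
    · exact ENNReal.ofReal_toReal_le
    · simp
  have heq : ∀ y ∈ Finset.Icc (-(K:ℤ)) K, ENNReal.ofReal (h y) = g y := by
    intro y hy; simp only [hh, if_pos hy]
    exact ENNReal.ofReal_toReal (hgf y)
  have hmain := osMax_lp r hr L K h hh0 (fun y hy => by simp only [hh, if_neg hy])
  have hbW : ∀ y ∈ W, b L y ≤ ENNReal.ofReal (osMax L h y) := by
    intro y hy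
    refine Finset.sup_le fun n hn => ?_
    have hn' := Finset.mem_range.mp hn
    have h1 : (∑ m ∈ range (n+1), h (y + m)) / ((n+1 : ℕ):ℝ) ≤ osMax L h y :=
      Finset.le_sup' (fun n : ℕ => (∑ m ∈ range n, h (y + m)) / (n:ℝ)) (show n+1 ∈ range (L+1) by simp; omega)
    refine le_trans (le_of_eq ?_) (ENNReal.ofReal_le_ofReal h1)
    simp only [ha]
    rw [div_eq_inv_mul, ENNReal.ofReal_mul (by positivity), ENNReal.ofReal_inv_of_pos (by positivity), ENNReal.ofReal_natCast,
      ENNReal.ofReal_sum_of_nonneg (fun m _ => hh0 _)]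
    congr 1
    refine Finset.sum_congr rfl fun m hm => (heq _ ?_).symm
    have := Finset.mem_Icc.mp (hK0 y hy)
    have := Finset.mem_range.mp hm
    rw [Finset.mem_Icc]; push_cast [hK]; omega
  calc ∑ y ∈ W, b L y ^ r ≤ ∑ y ∈ W, ENNReal.ofReal (osMax L h y) ^ r :=
        Finset.sum_le_sum fun y hy => ENNReal.rpow_le_rpow (hbW y hy) hr0.le
    _ ≤ ∑' y, ENNReal.ofReal (osMax L h y) ^ r := ENNReal.sum_le_tsum W
    _ ≤ _ := hmain
    _ ≤ _ := by
      gcongr with y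
      exact hle y

/-- centered maximal function -/
def cHL (g : ℤ → ℝ≥0∞) (y : ℤ) : ℝ≥0∞ :=
  ⨆ (N : ℕ) (_ : 1 ≤ N), (N : ℝ≥0∞)⁻¹ * ∑ m ∈ Finset.Icc (-(N:ℤ)) N, g (y - m)

lemma cHL_le (g : ℤ → ℝ≥0∞) (y : ℤ) : cHL g y ≤ 2 * (osHL g y + osHL (fun z => g (-z)) (-y)) := by
  refine iSup_le fun N => iSup_le fun hN => ?_
  have h1 : ∑ m ∈ Finset.Icc (-(N:ℤ)) N, g (y - m) ≤
      ∑ m ∈ range (N+1), g (y + m) + ∑ m ∈ range (N+1), g (-(-y + m)) := by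
    have hsub : Finset.Icc (-(N:ℤ)) N ⊆ (range (N+1)).image (fun m : ℕ => -(m:ℤ)) ∪ (range (N+1)).image (fun m : ℕ => (m:ℤ)) := by
      intro m hm
      rw [Finset.mem_Icc] at hm
      simp only [Finset.mem_union, Finset.mem_image, Finset.mem_range]
      rcases le_total m 0 with h | h
      · left; exact ⟨m.natAbs, by omega, by omega⟩
      · right; exact ⟨m.natAbs, by omega, by omega⟩
    refine (Finset.sum_le_sum_of_subset hsub).trans (le_trans ?_ (le_of_eq (?_ : ∑ m ∈ (range (N+1)).image (fun m : ℕ => -(m:ℤ)), g (y - m) + ∑ m ∈ (range (N+1)).image (fun m : ℕ => (m:ℤ)), g (y - m) = _)))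
    · rw [← Finset.sum_union_inter]; exact le_self_add
    rw [Finset.sum_image (by intro a _ b _ h; simpa using h), Finset.sum_image (by intro a _ b _ h; simpa using h)]
    congr 1
    · refine Finset.sum_congr rfl fun m _ => ?_
      congr 1; ring
    · refine Finset.sum_congr rfl fun m _ => ?_
      congr 1; ring
  have h2 : (N:ℝ≥0∞)⁻¹ ≤ 2 * ((N+1:ℕ):ℝ≥0∞)⁻¹ := by
    rw [ENNReal.inv_le_iff_inv_le, ENNReal.mul_inv (Or.inl two_ne_zero) (Or.inl ENNReal.ofNat_ne_top), inv_inv,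
      mul_comm, ← div_eq_mul_inv]
    refine ENNReal.div_le_of_le_mul ?_
    exact_mod_cast (by omega : N + 1 ≤ N * 2)
  calc _ ≤ (2 * ((N+1:ℕ):ℝ≥0∞)⁻¹) * (∑ m ∈ range (N+1), g (y + m) + ∑ m ∈ range (N+1), g (-(-y + m))) := by gcongr
    _ = 2 * (((N+1:ℕ):ℝ≥0∞)⁻¹ * (∑ m ∈ range (N+1), g (y + m)) + ((N+1:ℕ):ℝ≥0∞)⁻¹ * ∑ m ∈ range (N+1), g (-(-y + m))) := by ring
    _ ≤ _ := by
      gcongr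
      · exact le_iSup (fun n : ℕ => ((n+1 : ℕ) : ℝ≥0∞)⁻¹ * ∑ m ∈ range (n+1), g (y + m)) N
      · exact le_iSup (fun n : ℕ => ((n+1 : ℕ) : ℝ≥0∞)⁻¹ * ∑ m ∈ range (n+1), g (-(-y + m))) N

lemma cHL_lp (r : ℝ) (hr : 1 < r) : ∃ C : ℝ≥0, ∀ g : ℤ → ℝ≥0∞, ∑' y, cHL g y ^ r ≤ C * ∑' y, g y ^ r := by
  have hr0 : 0 < r := by linarith
  set c : ℝ≥0∞ := ENNReal.ofReal (r/(r-1)) ^ r with hc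
  set D : ℝ≥0∞ := 2^r * (2^(r-1) * (c + c)) with hD
  have hcf : c ≠ ∞ := ENNReal.rpow_ne_top_of_nonneg hr0.le ENNReal.ofReal_ne_top
  have hDf : D ≠ ∞ := by
    refine ENNReal.mul_ne_top (ENNReal.rpow_ne_top_of_nonneg hr0.le ENNReal.ofNat_ne_top)
      (ENNReal.mul_ne_top (ENNReal.rpow_ne_top_of_nonneg (by linarith) ENNReal.ofNat_ne_top) (ENNReal.add_ne_top.mpr ⟨hcf, hcf⟩))
  refine ⟨D.toNNReal, fun g => ?_⟩
  rw [ENNReal.coe_toNNReal hDf]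
  have h1 := osHL_lp r hr g
  have h2 := osHL_lp r hr (fun z => g (-z))
  have h2' : ∑' y, g (-y) ^ r = ∑' y, g y ^ r := (Equiv.neg ℤ).tsum_eq (fun y => g y ^ r)
  rw [h2'] at h2
  have h3 : ∑' y, osHL (fun z => g (-z)) (-y) ^ r = ∑' y, osHL (fun z => g (-z)) y ^ r :=
    (Equiv.neg ℤ).tsum_eq (fun y => osHL (fun z => g (-z)) y ^ r)
  calc ∑' y, cHL g y ^ r ≤ ∑' y, 2^r * (2^(r-1) * (osHL g y ^ r + osHL (fun z => g (-z)) (-y) ^ r)) := by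
        refine ENNReal.tsum_le_tsum fun y => ?_
        refine (ENNReal.rpow_le_rpow (cHL_le g y) hr0.le).trans ?_
        rw [ENNReal.mul_rpow_of_nonneg _ _ hr0.le]
        gcongr
        exact ENNReal.rpow_add_le_mul_rpow_add_rpow _ _ hr.le
    _ = 2^r * (2^(r-1) * (∑' y, osHL g y ^ r + ∑' y, osHL (fun z => g (-z)) y ^ r)) := by
        rw [ENNReal.tsum_mul_left, ENNReal.tsum_mul_left, ENNReal.tsum_add, h3]
    _ ≤ 2^r * (2^(r-1) * (c * ∑' y, g y ^ r + c * ∑' y, g y ^ r)) := by gcongr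
    _ = _ := by rw [hD]; ring

lemma prod_le_pairs (n : ℕ) (hn : 2 ≤ n) (u : Fin n → ℝ) (hu : ∀ j, 0 ≤ u j) :
    ∏ j, u j ≤ ∑ j, (1/n:ℝ) * ((u j ^ (n/4:ℝ))^2 * (u (finRotate n j) ^ (n/4:ℝ))^2) := by
  have hn0 : (0:ℝ) < n := by positivity
  set v : Fin n → ℝ := fun j => u j ^ (n/4:ℝ) with hv
  have hv0 : ∀ j, 0 ≤ v j := fun j => Real.rpow_nonneg (hu j) _
  have h := Real.geom_mean_le_arith_mean_weighted Finset.univ (fun _ : Fin n => (1/n:ℝ))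
    (fun j => (v j)^2 * (v (finRotate n j))^2) (fun _ _ => by positivity) (by simp [hn0.ne']) (fun j _ => by positivity)
  refine le_trans (le_of_eq ?_) h
  rw [Real.finsetProd_rpow _ _ (fun j _ => by positivity), Finset.prod_mul_distrib,
    Equiv.prod_comp (finRotate n) (fun j => (v j)^2), ← Finset.prod_mul_distrib]
  have h2 : ∀ j, v j ^ 2 * v j ^ 2 = u j ^ (n:ℝ) := by
    intro j
    simp only [hv]
    rw [← pow_add, ← Real.rpow_natCast, ← Real.rpow_mul (hu j)]
    congr 1; push_cast; ring
  simp only [h2]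
  rw [Real.finsetProd_rpow _ _ (fun j _ => hu j), ← Real.rpow_mul (Finset.prod_nonneg fun j _ => hu j),
    mul_one_div_cancel hn0.ne', Real.rpow_one]

lemma finRotate_ne (n : ℕ) (hn : 2 ≤ n) (j : Fin n) : j ≠ finRotate n j := by
  obtain ⟨k, rfl⟩ : ∃ k, n = k + 1 := ⟨n-1, by omega⟩
  rw [finRotate_apply]
  intro h
  have h2 := congrArg Fin.val h
  rw [Fin.val_add_one] at h2
  split_ifs at h2 with h3
  · rw [h3] at h2; simp at h2; omega
  · omega

lemma sphere_prod_bound (n : ℕ) (hn : 5 ≤ n) : ∃ C : ℝ, 0 < C ∧ ∀ lam : ℕ, 1 ≤ lam → ∀ F : Fin n → ℤ → ℝ,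
    (∀ j m, 0 ≤ F j m) →
    ∑ x ∈ (sphere_finite n lam).toFinset, ∏ j, F j (x j) ≤ C * (Real.sqrt lam)^(n-2) *
      ∏ j, ((Nat.sqrt lam : ℝ)⁻¹ * ∑ m ∈ Finset.Icc (-(Nat.sqrt lam:ℤ)) (Nat.sqrt lam), F j m ^ (3*n/4:ℝ))^(4/(3*n):ℝ) := by
  obtain ⟨C, hC, hp⟩ := pair_bound n hn
  refine ⟨C, hC, fun lam hlam F hF => ?_⟩
  have hn0 : (0:ℝ) < n := by positivity
  obtain ⟨hN, -, -⟩ := sqrt_bounds lam hlam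
  have hN' : (0:ℝ) < Nat.sqrt lam := by exact_mod_cast hN
  set N := Nat.sqrt lam with hNdef
  set R := Real.sqrt lam
  set B := Finset.Icc (-(N:ℤ)) N with hB
  set s : Fin n → ℝ := fun j => (N:ℝ)⁻¹ * ∑ m ∈ B, F j m ^ (3*n/4:ℝ) with hs
  have hs0 : ∀ j, 0 ≤ s j := fun j => mul_nonneg (by positivity) (Finset.sum_nonneg fun m _ => Real.rpow_nonneg (hF j m) _)
  set a : Fin n → ℝ := fun j => s j ^ (4/(3*n):ℝ) with ha
  have ha0 : ∀ j, 0 ≤ a j := fun j => Real.rpow_nonneg (hs0 j) _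
  have hbox : ∀ x ∈ (sphere_finite n lam).toFinset, ∀ j, x j ∈ B := by
    intro x hx j
    simp only [Set.Finite.mem_toFinset, Set.mem_ofPred_eq] at hx
    exact sphere_mem_box n lam x hx j
  change _ ≤ C * R^(n-2) * ∏ j, a j
  by_cases hz : ∃ j, s j = 0
  · obtain ⟨j, hj⟩ := hz
    have h1 : ∑ m ∈ B, F j m ^ (3*n/4:ℝ) = 0 := by
      simp only [hs] at hj
      exact (mul_eq_zero.mp hj).resolve_left (by positivity)
    rw [Finset.sum_eq_zero_iff_of_nonneg (fun m _ => Real.rpow_nonneg (hF j m) _)] at h1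
    rw [Finset.sum_eq_zero]
    · have := Finset.prod_nonneg (s := Finset.univ) (fun j _ => ha0 j)
      positivity
    · intro x hx
      refine Finset.prod_eq_zero (Finset.mem_univ j) ?_
      have := h1 (x j) (hbox x hx j)
      exact (Real.rpow_eq_zero (hF j _) (by positivity)).mp this
  · push Not at hz
    have hspos : ∀ j, 0 < s j := fun j => lt_of_le_of_ne (hs0 j) (Ne.symm (hz j))
    have hapos : ∀ j, 0 < a j := fun j => Real.rpow_pos_of_pos (hspos j) _
    set G : Fin n → ℤ → ℝ := fun j m => F j m / a j with hG
    have hG0 : ∀ j m, 0 ≤ G j m := fun j m => div_nonneg (hF j m) (ha0 j)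
    have hGs : ∀ j, ∑ m ∈ B, (G j m ^ (n/4:ℝ))^3 ≤ N := by
      intro j
      have e : ∀ m, (G j m ^ (n/4:ℝ))^3 = F j m ^ (3*n/4:ℝ) / s j := by
        intro m
        rw [← Real.rpow_natCast, ← Real.rpow_mul (hG0 j m)]
        simp only [hG]
        rw [show (n/4:ℝ) * ((3:ℕ):ℝ) = 3*n/4 by push_cast; ring, Real.div_rpow (hF j m) (ha0 j)]
        congr 1
        simp only [ha]
        rw [← Real.rpow_mul (hs0 j), show (4/(3*n):ℝ) * (3*n/4) = 1 by field_simp, Real.rpow_one]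
      simp only [e]
      rw [← Finset.sum_div, div_le_iff₀ (hspos j)]
      simp only [hs]
      rw [mul_inv_cancel_left₀ hN'.ne']
    have hGb : ∑ x ∈ (sphere_finite n lam).toFinset, ∏ j, G j (x j) ≤ C * R^(n-2) := by
      calc _ ≤ ∑ x ∈ (sphere_finite n lam).toFinset, ∑ j, (1/n:ℝ) * ((G j (x j) ^ (n/4:ℝ))^2 * (G (finRotate n j) (x (finRotate n j)) ^ (n/4:ℝ))^2) :=
            Finset.sum_le_sum fun x _ => prod_le_pairs n (by omega) (fun j => G j (x j)) (fun j => hG0 j _)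
        _ = ∑ j, (1/n:ℝ) * ∑ x ∈ (sphere_finite n lam).toFinset, ((G j (x j) ^ (n/4:ℝ))^2 * (G (finRotate n j) (x (finRotate n j)) ^ (n/4:ℝ))^2) := by
            rw [Finset.sum_comm]; simp only [Finset.mul_sum]
        _ ≤ ∑ j : Fin n, (1/n:ℝ) * (C * R^(n-2)) := by
            refine Finset.sum_le_sum fun j _ => mul_le_mul_of_nonneg_left ?_ (by positivity)
            exact hp lam hlam j (finRotate n j) (finRotate_ne n (by omega) j) (fun m => G j m ^ (n/4:ℝ))
              (fun m => G (finRotate n j) m ^ (n/4:ℝ)) (fun m => Real.rpow_nonneg (hG0 _ m) _)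
              (fun m => Real.rpow_nonneg (hG0 _ m) _) (hGs _) (hGs _)
        _ = C * R^(n-2) := by
            rw [Finset.sum_const, Finset.card_univ, Fintype.card_fin, nsmul_eq_mul]; field_simp
    have e : ∀ x : Fin n → ℤ, ∏ j, F j (x j) = (∏ j, G j (x j)) * ∏ j, a j := by
      intro x
      rw [← Finset.prod_mul_distrib]
      refine Finset.prod_congr rfl fun j _ => ?_
      simp only [hG]; rw [div_mul_cancel₀ _ (hapos j).ne']
    simp only [e]
    rw [← Finset.sum_mul]
    exact mul_le_mul_of_nonneg_right hGb (Finset.prod_nonneg fun j _ => ha0 j)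

lemma maxFn_le (n : ℕ) (hn : 5 ≤ n) : ∃ C : ℝ≥0, ∀ (f : Fin n → ℤ → ℂ) (y : ℤ),
    maxFn n f y ≤ C * ∏ j, cHL (fun z => (‖f j z‖₊ : ℝ≥0∞) ^ (3*n/4:ℝ)) y ^ (4/(3*n):ℝ) := by
  obtain ⟨C, hC, hb⟩ := sphere_prod_bound n hn
  obtain ⟨c, hc, hlow⟩ := sphere_lower n hn
  refine ⟨(C/c).toNNReal, fun f y => iSup_le fun lam => iSup_le fun hlam => ?_⟩
  have hl : (1:ℝ) ≤ lam := by exact_mod_cast hlam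
  have hn0 : (0:ℝ) < n := by positivity
  have h1 := hb lam hlam (fun j m => ‖f j (y - m)‖) (fun j m => norm_nonneg _)
  have h2 := hlow lam hlam
  obtain ⟨hN, -, -⟩ := sqrt_bounds lam hlam
  have hN' : (0:ℝ) < Nat.sqrt lam := by exact_mod_cast hN
  set N := Nat.sqrt lam with hNdef
  have hR : 0 < Real.sqrt lam ^ (n-2) := pow_pos (Real.sqrt_pos.mpr (by linarith)) _
  have hcnt : 0 < (sphereCount n lam : ℝ) := lt_of_lt_of_le (mul_pos hc hR) h2
  set P := ∏ j, ((N:ℝ)⁻¹ * ∑ m ∈ Finset.Icc (-(N:ℤ)) N, ‖f j (y - m)‖ ^ (3*n/4:ℝ))^(4/(3*n):ℝ) with hP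
  have hs0 : ∀ j, 0 ≤ (N:ℝ)⁻¹ * ∑ m ∈ Finset.Icc (-(N:ℤ)) N, ‖f j (y - m)‖ ^ (3*n/4:ℝ) := fun j => by positivity
  have hP0 : 0 ≤ P := Finset.prod_nonneg fun j _ => Real.rpow_nonneg (hs0 j) _
  have h3 : ‖mulAvg n lam f y‖ ≤ C/c * P := by
    unfold mulAvg
    rw [finsum_mem_eq_finite_toFinset_sum _ (sphere_finite n lam), norm_mul, norm_inv, Complex.norm_natCast]
    have h4 : ‖∑ x ∈ (sphere_finite n lam).toFinset, ∏ i, f i (y - x i)‖ ≤ C * Real.sqrt lam ^ (n-2) * P := by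
      refine le_trans (norm_sum_le _ _) ?_
      simp only [norm_prod]
      exact h1
    calc _ ≤ (sphereCount n lam : ℝ)⁻¹ * (C * Real.sqrt lam ^ (n-2) * P) := by gcongr
      _ ≤ (c * Real.sqrt lam ^ (n-2))⁻¹ * (C * Real.sqrt lam ^ (n-2) * P) := by
        gcongr
      _ = _ := by field_simp
  have h5 : (‖mulAvg n lam f y‖₊ : ℝ≥0∞) ≤ ENNReal.ofReal (C/c * P) := by
    rw [← enorm_eq_nnnorm, ← ofReal_norm]
    exact ENNReal.ofReal_le_ofReal h3
  refine h5.trans ?_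
  rw [ENNReal.ofReal_mul (by positivity)]
  change ENNReal.ofReal (C/c) * _ ≤ ENNReal.ofReal (C/c) * _
  gcongr
  rw [hP, ENNReal.ofReal_prod_of_nonneg (fun j _ => Real.rpow_nonneg (hs0 j) _)]
  refine Finset.prod_le_prod' fun j _ => ?_
  rw [← ENNReal.ofReal_rpow_of_nonneg (hs0 j) (by positivity)]
  refine ENNReal.rpow_le_rpow ?_ (by positivity)
  refine le_trans (le_of_eq ?_) (le_iSup₂ (f := fun (N : ℕ) (_ : 1 ≤ N) => (N : ℝ≥0∞)⁻¹ * ∑ m ∈ Finset.Icc (-(N:ℤ)) N, (‖f j (y - m)‖₊ : ℝ≥0∞) ^ (3*n/4:ℝ)) N hN)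
  rw [ENNReal.ofReal_mul (by positivity), ENNReal.ofReal_inv_of_pos hN', ENNReal.ofReal_natCast,
    ENNReal.ofReal_sum_of_nonneg (fun m _ => by positivity)]
  congr 1
  refine Finset.sum_congr rfl fun m _ => ?_
  rw [← ENNReal.ofReal_rpow_of_nonneg (norm_nonneg _) (by positivity), ofReal_norm, enorm_eq_nnnorm]

/-- For `n ≥ 5`, `1 ≤ q < ∞` and `p = n q`, the maximal operator `A_*`
is bounded from `ℓ^p × ⋯ × ℓ^p` to `ℓ^q`. -/
theorem statement1 (n : ℕ) (hn : 5 ≤ n) (q : ℝ) (hq : 1 ≤ q) :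
    ∃ C : ℝ≥0, ∀ f : Fin n → ℤ → ℂ, (∀ i, lpNorm (n * q) (f i) ≠ ∞) →
      lqNormE q (maxFn n f) ≤ (C : ℝ≥0∞) * ∏ i, lpNorm (n * q) (f i) := by
  obtain ⟨C, hC⟩ := maxFn_le n hn
  obtain ⟨D, hD⟩ := cHL_lp (4*q/3) (by linarith)
  have hn0 : (0:ℝ) < n := by positivity
  have hq0 : 0 < q := by linarith
  refine ⟨C * D^(1/q), fun f _ => ?_⟩
  set H : Fin n → ℤ → ℝ≥0∞ := fun j y => cHL (fun z => (‖f j z‖₊ : ℝ≥0∞) ^ (3*n/4:ℝ)) y with hH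
  set T : Fin n → ℝ≥0∞ := fun j => ∑' x : ℤ, (‖f j x‖₊:ℝ≥0∞)^(n*q) with hT
  have h1 : ∑' y, maxFn n f y ^ q ≤ (C:ℝ≥0∞)^q * ∑' y, ∏ j, (H j y ^ (4*q/3)) ^ (1/n:ℝ) := by
    rw [← ENNReal.tsum_mul_left]
    refine ENNReal.tsum_le_tsum fun y => ?_
    refine (ENNReal.rpow_le_rpow (hC f y) hq0.le).trans (le_of_eq ?_)
    rw [ENNReal.mul_rpow_of_nonneg _ _ hq0.le, ← ENNReal.prod_rpow_of_nonneg hq0.le]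
    congr 1
    refine Finset.prod_congr rfl fun j _ => ?_
    rw [← ENNReal.rpow_mul, ← ENNReal.rpow_mul]
    congr 1; field_simp
  have h2 : ∑' y, ∏ j, (H j y ^ (4*q/3)) ^ (1/n:ℝ) ≤ ∏ j, (∑' y, H j y ^ (4*q/3)) ^ (1/n:ℝ) := by
    have := ENNReal.lintegral_prod_norm_pow_le (μ := (Measure.count : Measure ℤ)) Finset.univ
      (f := fun j y => H j y ^ (4*q/3)) (fun j _ => (measurable_of_countable _).aemeasurable)
      (p := fun _ => (1/n:ℝ)) (by simp [hn0.ne']) (fun j _ => by positivity)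
    simpa only [lintegral_count] using this
  have h3 : ∀ j, ∑' y, H j y ^ (4*q/3) ≤ D * T j := by
    intro j
    refine (hD _).trans (le_of_eq ?_)
    simp only [hT, ← ENNReal.rpow_mul]
    congr 3; ext z; congr 1; ring
  have h4 : ∑' y, maxFn n f y ^ q ≤ (C:ℝ≥0∞)^q * ∏ j, (D * T j) ^ (1/n:ℝ) := by
    refine h1.trans ?_
    gcongr
    refine h2.trans (Finset.prod_le_prod' fun j _ => ENNReal.rpow_le_rpow (h3 j) (by positivity))
  unfold lqNormE _root_.lpNorm
  refine (ENNReal.rpow_le_rpow h4 (by positivity)).trans (le_of_eq ?_)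
  rw [ENNReal.mul_rpow_of_nonneg _ _ (by positivity), ← ENNReal.rpow_mul, mul_one_div_cancel hq0.ne', ENNReal.rpow_one,
    ← ENNReal.prod_rpow_of_nonneg (by positivity)]
  have h5 : ∀ j, ((D * T j) ^ (1/n:ℝ)) ^ (1/q) = (D:ℝ≥0∞)^(1/n*(1/q):ℝ) * T j ^ (1/(n*q)) := by
    intro j
    rw [← ENNReal.rpow_mul, ENNReal.mul_rpow_of_nonneg _ _ (by positivity)]
    congr 2; field_simp
  simp only [h5]
  rw [Finset.prod_mul_distrib, Finset.prod_const, Finset.card_univ, Fintype.card_fin, ← ENNReal.rpow_natCast,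
    ← ENNReal.rpow_mul, show (1/n*(1/q)*n:ℝ) = 1/q by field_simp, ← mul_assoc, ENNReal.coe_mul,
    ENNReal.coe_rpow_of_nonneg _ (by positivity)]
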